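/- Lemma 2.1(ii): Let v be a classical solution of v_t = v_rr + ((m−1)/r) v_r − (b(r,t)/r²) v on [0,R] × (t1,t2) satisfying the boundary condition (1.5) and v(0,t) = 0 for all t ∈ (t1,t2), and suppose v is not identically zero. Then for any t0 ∈ (t1,t2) and any r0 ∈ (0,R) there exist a nonnegative integer k and a nontrivial polynomial ψ solving the Hermite equation ψ'' − (1/2) r ψ' + (k/2) ψ = 0 on ℝ, such that the rescaled functions r ↦ ε^{−k} v(r0 + εr, t0 − ε²) converge to ψ as ε → 0⁺, uniformly together with their first and second r-derivatives on every compact subset of ℝ. -/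

import Mathlib

open Set Filter

namespace RL

open scoped Nat

noncomputable def dX (f : ℝ × ℝ → ℝ) : ℝ × ℝ → ℝ := fun p => fderiv ℝ f p (1, 0)
noncomputable def dS (f : ℝ × ℝ → ℝ) : ℝ × ℝ → ℝ := fun p => fderiv ℝ f p (0, 1)

abbrev Sm (f : ℝ × ℝ → ℝ) : Prop := ContDiff ℝ (⊤ : ℕ∞) f

lemma Sm.dX {f : ℝ × ℝ → ℝ} (hf : Sm f) : Sm (dX f) :=
  (hf.fderiv_right (m := ((⊤ : ℕ∞) : WithTop ℕ∞)) (by simp)).clm_apply contDiff_const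

lemma Sm.dS {f : ℝ × ℝ → ℝ} (hf : Sm f) : Sm (dS f) :=
  (hf.fderiv_right (m := ((⊤ : ℕ∞) : WithTop ℕ∞)) (by simp)).clm_apply contDiff_const

lemma Sm.diff {f : ℝ × ℝ → ℝ} (hf : Sm f) : Differentiable ℝ f :=
  hf.differentiable (by simp)

lemma Sm.hX {f : ℝ × ℝ → ℝ} (hf : Sm f) (x s : ℝ) :
    HasDerivAt (fun x => f (x, s)) (RL.dX f (x, s)) x := by
  have h1 := (hf.diff (x, s)).hasFDerivAt
  have h2 : HasDerivAt (fun x : ℝ => (x, s)) ((1 : ℝ), (0 : ℝ)) x :=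
    (hasDerivAt_id x).prodMk (hasDerivAt_const x s)
  exact h1.comp_hasDerivAt x h2

lemma Sm.hS {f : ℝ × ℝ → ℝ} (hf : Sm f) (x s : ℝ) :
    HasDerivAt (fun s => f (x, s)) (RL.dS f (x, s)) s := by
  have h1 := (hf.diff (x, s)).hasFDerivAt
  have h2 : HasDerivAt (fun s : ℝ => (x, s)) ((0 : ℝ), (1 : ℝ)) s :=
    (hasDerivAt_const s x).prodMk (hasDerivAt_id s)
  exact h1.comp_hasDerivAt s h2

lemma Sm.comm {f : ℝ × ℝ → ℝ} (hf : Sm f) : RL.dS (RL.dX f) = RL.dX (RL.dS f) := by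
  funext p
  have hd : Differentiable ℝ (fderiv ℝ f) :=
    (hf.fderiv_right (m := ((⊤ : ℕ∞) : WithTop ℕ∞)) (by simp)).differentiable (by simp)
  have key := second_derivative_symmetric (f := f) (f' := fderiv ℝ f)
    (fun y => (hf.diff y).hasFDerivAt) (hd p).hasFDerivAt (1, 0) (0, 1)
  have e : ∀ w z : ℝ × ℝ, fderiv ℝ (fun q => fderiv ℝ f q w) p z
      = fderiv ℝ (fderiv ℝ f) p z w := by
    intro w z
    rw [fderiv_clm_apply (hd p) (differentiableAt_const w)]
    simp
  change fderiv ℝ (fun q => fderiv ℝ f q (1, 0)) p (0, 1)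
    = fderiv ℝ (fun q => fderiv ℝ f q (0, 1)) p (1, 0)
  rw [e, e, key]

noncomputable def jet (f : ℝ × ℝ → ℝ) (i j : ℕ) : ℝ := (dX^[i] (dS^[j] f)) (0, 0)

lemma jet_dS (f : ℝ × ℝ → ℝ) (i j : ℕ) : jet (dS f) i j = jet f i (j + 1) := by
  simp [jet, Function.iterate_succ_apply]

lemma Sm.iterS {f : ℝ × ℝ → ℝ} (hf : Sm f) (j : ℕ) : Sm (RL.dS^[j] f) := by
  induction j generalizing f with
  | zero => exact hf
  | succ n ih => exact ih hf.dS

lemma Sm.iterX {f : ℝ × ℝ → ℝ} (hf : Sm f) (j : ℕ) : Sm (RL.dX^[j] f) := by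
  induction j generalizing f with
  | zero => exact hf
  | succ n ih => exact ih hf.dX

lemma Sm.commIter {f : ℝ × ℝ → ℝ} (hf : Sm f) (j : ℕ) :
    RL.dS^[j] (RL.dX f) = RL.dX (RL.dS^[j] f) := by
  induction j generalizing f with
  | zero => rfl
  | succ n ih =>
    rw [Function.iterate_succ_apply, hf.comm, ih hf.dS, Function.iterate_succ_apply]

lemma jet_dX {f : ℝ × ℝ → ℝ} (hf : Sm f) (i j : ℕ) : jet (dX f) i j = jet f (i + 1) j := by
  simp only [jet, hf.commIter, Function.iterate_succ_apply]

noncomputable def Q (N : ℕ) (a : ℕ → ℕ → ℝ) (x s : ℝ) : ℝ :=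
  ∑ j ∈ Finset.range (N / 2 + 1), a (N - 2 * j) j * x ^ (N - 2 * j) / (N - 2 * j)! * s ^ j / j !

lemma Q_zero_s (N : ℕ) (a : ℕ → ℕ → ℝ) (x : ℝ) : Q N a x 0 = a N 0 * x ^ N / N ! := by
  unfold Q
  rw [Finset.sum_range_succ']
  simp

lemma hasDerivAt_Q_s (N : ℕ) (a : ℕ → ℕ → ℝ) (x s : ℝ) :
    HasDerivAt (fun s => Q (N + 2) a x s) (Q N (fun i j => a i (j + 1)) x s) s := by
  have e : (fun s => Q (N + 2) a x s) = fun s => (∑ j ∈ Finset.range (N / 2 + 1),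
      a (N - 2 * j) (j + 1) * x ^ (N - 2 * j) / (N - 2 * j)! * (s ^ (j + 1) / (j + 1)!))
      + a (N + 2) 0 * x ^ (N + 2) / (N + 2)! := by
    funext s
    unfold Q
    rw [show (N + 2) / 2 + 1 = (N / 2 + 1) + 1 by omega, Finset.sum_range_succ']
    congr 1
    · apply Finset.sum_congr rfl
      intro j _
      rw [show N + 2 - 2 * (j + 1) = N - 2 * j by omega]
      ring
    · simp
  rw [e]
  apply HasDerivAt.add_const
  unfold Q
  apply HasDerivAt.fun_sum
  intro j _
  have h := ((hasDerivAt_pow (j + 1) s).div_const ((j + 1)! : ℝ)).const_mul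
    (a (N - 2 * j) (j + 1) * x ^ (N - 2 * j) / (N - 2 * j)!)
  refine h.congr_deriv ?_
  have h1 : ((j + 1 : ℕ) : ℝ) ≠ 0 := by positivity
  have h2 : (j ! : ℝ) ≠ 0 := by positivity
  have h3 : ((N - 2 * j)! : ℝ) ≠ 0 := by positivity
  rw [Nat.factorial_succ]
  push_cast at *
  field_simp

lemma mvt_bound {g g' : ℝ → ℝ} {C a b : ℝ}
    (hg : ∀ x ∈ Icc a b, HasDerivAt g (g' x) x) (hb : ∀ x ∈ Icc a b, |g' x| ≤ C)
    {x y : ℝ} (hx : x ∈ Icc a b) (hy : y ∈ Icc a b) : |g y - g x| ≤ C * |y - x| :=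
  Convex.norm_image_sub_le_of_norm_hasDerivWithin_le (f' := g')
    (fun x hx => (hg x hx).hasDerivWithinAt) hb (convex_Icc a b) hx hy

lemma Sm.bdd {f : ℝ × ℝ → ℝ} (hf : Sm f) (A : ℝ) :
    ∃ C, 0 ≤ C ∧ ∀ x ∈ Icc (-A) A, ∀ s ∈ Icc (-A) A, |f (x, s)| ≤ C := by
  obtain ⟨C, hC⟩ := ((isCompact_Icc (a := -A) (b := A)).prod
    (isCompact_Icc (a := -A) (b := A))).exists_bound_of_continuousOn
    hf.continuous.continuousOn
  exact ⟨max C 0, le_max_right _ _, fun x hx s hs =>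
    (hC (x, s) ⟨hx, hs⟩).trans (le_max_left _ _)⟩

theorem taylor (N : ℕ) : ∀ f : ℝ × ℝ → ℝ, Sm f → (∀ i j, i + 2 * j < N → jet f i j = 0) →
    ∃ C, 0 ≤ C ∧ ∀ x σ : ℝ, |x| ≤ 1 → 0 ≤ σ → σ ≤ 1 →
      |f (x, σ ^ 2) - Q N (jet f) x (σ ^ 2)| ≤ C * (|x| + σ) ^ (N + 1) := by
  induction N using Nat.strong_induction_on with
  | _ N ih =>
  intro f hf hj
  -- bound on the x-direction
  obtain ⟨C1, hC1, h1⟩ : ∃ C, 0 ≤ C ∧ ∀ x : ℝ, |x| ≤ 1 →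
      |f (x, 0) - Q N (jet f) x 0| ≤ C * |x| ^ (N + 1) := by
    obtain ⟨C, hC, h⟩ : ∃ C, 0 ≤ C ∧ ∀ x : ℝ, |x| ≤ 1 →
      |dX f (x, 0) - (jet f N 0 * (N * x ^ (N - 1)) / N !)| ≤ C * |x| ^ N := by
      rcases N with _ | N
      · obtain ⟨C, hC, h⟩ := hf.dX.bdd 1
        refine ⟨C, hC, fun x hx => ?_⟩
        have := h x (abs_le.1 hx) 0 (by simp)
        simpa using this
      · obtain ⟨C, hC, h⟩ := ih N (by omega) (dX f) hf.dX (fun i j hij => by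
          rw [jet_dX hf]; exact hj _ _ (by omega))
        refine ⟨C, hC, fun x hx => ?_⟩
        have := h x 0 hx le_rfl zero_le_one
        rw [zero_pow two_ne_zero, Q_zero_s, jet_dX hf, add_zero] at this
        refine le_of_eq_of_le ?_ this
        congr 2
        rw [Nat.factorial_succ]
        have h1 : ((N + 1 : ℕ) : ℝ) ≠ 0 := by positivity
        have h2 : (N ! : ℝ) ≠ 0 := by positivity
        push_cast at *
        field_simp
    refine ⟨C, hC, fun x hx => ?_⟩
    have hz : f (0, 0) - Q N (jet f) 0 0 = 0 := by
      rw [Q_zero_s]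
      rcases N with _ | N
      · simp [jet]
      · have := hj 0 0 (by omega)
        simp [jet] at this
        simp [this]
    have := mvt_bound (g := fun x => f (x, 0) - Q N (jet f) x 0)
      (g' := fun x => dX f (x, 0) - (jet f N 0 * (N * x ^ (N - 1)) / N !))
      (C := C * |x| ^ N) (a := -|x|) (b := |x|)
      (fun y _ => by
        refine (hf.hX y 0).sub ?_
        simp only [Q_zero_s]
        exact ((hasDerivAt_pow N y).const_mul _).div_const _)
      (fun y hy => by
        have hy' : |y| ≤ |x| := abs_le.2 hy
        refine (h y (hy'.trans hx)).trans ?_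
        gcongr)
      (x := 0) (y := x) (by simp) ⟨neg_abs_le x, le_abs_self x⟩
    simp only [hz, sub_zero] at this
    rw [pow_succ]
    linarith
  -- bound on the s-direction
  obtain ⟨C2, hC2, h2⟩ : ∃ C, 0 ≤ C ∧ ∀ x σ : ℝ, |x| ≤ 1 → 0 ≤ σ → σ ≤ 1 →
      |(f (x, σ ^ 2) - Q N (jet f) x (σ ^ 2)) - (f (x, 0) - Q N (jet f) x 0)|
        ≤ C * (|x| + σ) ^ (N + 1) := by
    have small : N < 2 → ∃ C, 0 ≤ C ∧ ∀ x σ : ℝ, |x| ≤ 1 → 0 ≤ σ → σ ≤ 1 →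
      |(f (x, σ ^ 2) - Q N (jet f) x (σ ^ 2)) - (f (x, 0) - Q N (jet f) x 0)|
        ≤ C * σ ^ 2 := by
      intro hN
      obtain ⟨C, hC, h⟩ := hf.dS.bdd 1
      refine ⟨C, hC, fun x σ hx h0 h1 => ?_⟩
      have hQ : ∀ s, Q N (jet f) x s = Q N (jet f) x 0 := by
        intro s
        unfold Q
        rw [show N / 2 + 1 = 1 by omega]
        simp
      rw [hQ (σ ^ 2)]
      have hs1 : σ ^ 2 ≤ 1 := pow_le_one₀ h0 h1
      have := mvt_bound (g := fun s => f (x, s)) (g' := fun s => dS f (x, s)) (C := C)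
        (a := 0) (b := σ ^ 2) (fun s _ => hf.hS x s)
        (fun s hs => h x (abs_le.1 hx) s ⟨by linarith [hs.1], by linarith [hs.2]⟩)
        (x := 0) (y := σ ^ 2) (by simp; positivity) (by simp; positivity)
      rw [sub_zero, abs_of_nonneg (sq_nonneg σ)] at this
      calc _ = |f (x, σ ^ 2) - f (x, 0)| := by congr 1; ring
        _ ≤ _ := this
    rcases N with _ | _ | N
    · obtain ⟨C, hC, h⟩ := small (by omega)
      refine ⟨C, hC, fun x σ hx h0 h1 => (h x σ hx h0 h1).trans ?_⟩
      gcongr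
      simp only [zero_add, pow_one]
      nlinarith [abs_nonneg x]
    · obtain ⟨C, hC, h⟩ := small (by omega)
      refine ⟨C, hC, fun x σ hx h0 h1 => (h x σ hx h0 h1).trans ?_⟩
      gcongr
      linarith [abs_nonneg x]
    · obtain ⟨C, hC, h⟩ := ih N (by omega) (dS f) hf.dS (fun i j hij => by
          rw [jet_dS]; exact hj _ _ (by omega))
      refine ⟨C, hC, fun x σ hx h0 h1 => ?_⟩
      have := mvt_bound (g := fun s => f (x, s) - Q (N + 2) (jet f) x s)
        (g' := fun s => dS f (x, s) - Q N (jet (dS f)) x s) (C := C * (|x| + σ) ^ (N + 1))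
        (a := 0) (b := σ ^ 2) (fun s _ => by
          refine (hf.hS x s).sub ?_
          have e : jet (dS f) = fun i j => jet f i (j + 1) := by
            funext i j; exact jet_dS f i j
          rw [e]
          exact hasDerivAt_Q_s N (jet f) x s)
        (fun s hs => by
          have hss : √s ≤ σ := (Real.sqrt_le_left h0).2 hs.2
          have := h x (√s) hx (Real.sqrt_nonneg s) (hss.trans h1)
          rw [Real.sq_sqrt hs.1] at this
          refine this.trans ?_
          gcongr)
        (x := 0) (y := σ ^ 2) (by simp; positivity) (by simp; positivity)
      rw [sub_zero, abs_of_nonneg (sq_nonneg σ)] at this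
      refine this.trans ?_
      rw [mul_assoc, show N + 2 + 1 = (N + 1) + 2 by ring, pow_add _ (N + 1) 2]
      gcongr
      linarith [abs_nonneg x]
  refine ⟨C1 + C2, by positivity, fun x σ hx h0 h1' => ?_⟩
  have a1 := h1 x hx
  have a2 := h2 x σ hx h0 h1'
  have a3 : |x| ^ (N + 1) ≤ (|x| + σ) ^ (N + 1) := by gcongr; linarith
  have a4 := abs_add_le ((f (x, σ ^ 2) - Q N (jet f) x (σ ^ 2)) - (f (x, 0) - Q N (jet f) x 0))
    (f (x, 0) - Q N (jet f) x 0)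
  rw [sub_add_cancel] at a4
  nlinarith

end RL

namespace RL

open scoped Nat

lemma tuo_of_le {F : ℝ → ℝ → ℝ} {f : ℝ → ℝ} {s : Set ℝ} {K : ℝ}
    (h : ∀ᶠ ε in nhdsWithin (0 : ℝ) (Ioi 0), ∀ r ∈ s, |F ε r - f r| ≤ K * ε) :
    TendstoUniformlyOn F f (nhdsWithin 0 (Ioi 0)) s := by
  rw [Metric.tendstoUniformlyOn_iff]
  intro e he
  have h2 : Tendsto (fun ε : ℝ => K * ε) (nhdsWithin (0 : ℝ) (Ioi 0)) (nhds 0) := by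
    have : Tendsto (fun ε : ℝ => K * ε) (nhds 0) (nhds (K * 0)) :=
      (continuous_const.mul continuous_id).tendsto 0
    rw [mul_zero] at this
    exact this.mono_left nhdsWithin_le_nhds
  filter_upwards [h, h2.eventually (gt_mem_nhds he)] with ε h1 h3 r hr
  rw [dist_comm, Real.dist_eq]
  exact (h1 r hr).trans_lt h3

lemma Q_homog (N : ℕ) (a : ℕ → ℕ → ℝ) (ε r : ℝ) :
    Q N a (ε * r) (ε ^ 2) = ε ^ N * Q N a r 1 := by
  unfold Q
  rw [Finset.mul_sum]
  apply Finset.sum_congr rfl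
  intro j hj
  have hj' : 2 * j ≤ N := by
    have := Finset.mem_range.1 hj; omega
  have : ε ^ N = ε ^ (N - 2 * j) * (ε ^ 2) ^ j := by
    rw [← pow_mul, ← pow_add]; congr 1; omega
  rw [this, mul_pow]
  ring

lemma ev_small {c : ℝ} (hc : 0 < c) : ∀ᶠ ε in nhdsWithin (0 : ℝ) (Ioi 0), 0 < ε ∧ ε < c := by
  filter_upwards [self_mem_nhdsWithin, nhdsWithin_le_nhds (gt_mem_nhds hc)] with ε h1 h2
  exact ⟨h1, h2⟩

lemma blow_lim {f : ℝ × ℝ → ℝ} (hf : Sm f) (N : ℕ)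
    (hj : ∀ i j, i + 2 * j < N → jet f i j = 0) (A : ℝ) (hA : 0 < A) :
    TendstoUniformlyOn (fun ε r => ε ^ (-(N : ℤ)) * f (ε * r, ε ^ 2))
      (fun r => Q N (jet f) r 1) (nhdsWithin 0 (Ioi 0)) (Icc (-A) A) := by
  obtain ⟨C, hC, h⟩ := taylor N f hf hj
  apply tuo_of_le (K := C * (A + 1) ^ (N + 1))
  filter_upwards [ev_small (c := 1 / (A + 1)) (by positivity)] with ε hε r hr
  obtain ⟨h0, h1⟩ := hε
  have hr' : |r| ≤ A := abs_le.2 hr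
  rw [lt_div_iff₀ (by positivity)] at h1
  have hx : |ε * r| ≤ 1 := by
    rw [abs_mul, abs_of_pos h0]; nlinarith [abs_nonneg r]
  have := h (ε * r) ε hx h0.le (by nlinarith)
  rw [Q_homog] at this
  have e : ε ^ (-(N : ℤ)) * f (ε * r, ε ^ 2) - Q N (jet f) r 1
      = ε ^ (-(N : ℤ)) * (f (ε * r, ε ^ 2) - ε ^ N * Q N (jet f) r 1) := by
    rw [zpow_neg, zpow_natCast]
    field_simp
  rw [e, abs_mul, abs_of_pos (zpow_pos h0 _)]
  calc _ ≤ ε ^ (-(N : ℤ)) * (C * (|ε * r| + ε) ^ (N + 1)) := by gcongr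
    _ ≤ ε ^ (-(N : ℤ)) * (C * (ε * (A + 1)) ^ (N + 1)) := by
        gcongr
        rw [abs_mul, abs_of_pos h0]; nlinarith
    _ = _ := by
        rw [zpow_neg, zpow_natCast, mul_pow, pow_succ ε N]
        field_simp

noncomputable def Qd (k d : ℕ) (f : ℝ × ℝ → ℝ) (r : ℝ) : ℝ :=
  if d ≤ k then Q (k - d) (jet f) r 1 else 0

lemma blow_lim_d {f : ℝ × ℝ → ℝ} (hf : Sm f) (k d : ℕ)
    (hj : ∀ i j, i + 2 * j + d < k → jet f i j = 0) (A : ℝ) (hA : 0 < A) :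
    TendstoUniformlyOn (fun ε r => ε ^ (-(k : ℤ)) * (ε ^ d * f (ε * r, ε ^ 2)))
      (Qd k d f) (nhdsWithin 0 (Ioi 0)) (Icc (-A) A) := by
  by_cases hd : d ≤ k
  · have h := blow_lim hf (k - d) (fun i j hij => hj i j (by omega)) A hA
    have e : Qd k d f = fun r => Q (k - d) (jet f) r 1 := by
      funext r; simp [Qd, hd]
    rw [e]
    refine h.congr ?_
    filter_upwards [self_mem_nhdsWithin] with ε hε r _
    have hε0 : ε ≠ 0 := ne_of_gt hε
    change ε ^ (-((k - d : ℕ) : ℤ)) * f (ε * r, ε ^ 2) = ε ^ (-(k : ℤ)) * (ε ^ d * f (ε * r, ε ^ 2))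
    rw [← mul_assoc, ← zpow_natCast ε d, ← zpow_add₀ hε0]
    congr 2
    omega
  · have e : Qd k d f = fun r => 0 := by
      funext r; simp [Qd, hd]
    rw [e]
    obtain ⟨C, hC, h⟩ := hf.bdd 1
    apply tuo_of_le (K := C)
    filter_upwards [ev_small (c := 1 / (A + 1)) (by positivity)] with ε hε r hr
    obtain ⟨h0, h1⟩ := hε
    have hr' : |r| ≤ A := abs_le.2 hr
    rw [lt_div_iff₀ (by positivity)] at h1
    have hx : |ε * r| ≤ 1 := by
      rw [abs_mul, abs_of_pos h0]; nlinarith [abs_nonneg r]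
    have h2 : ε ≤ 1 := by nlinarith
    have := h (ε * r) (abs_le.1 hx) (ε ^ 2) ⟨by nlinarith, by nlinarith⟩
    rw [sub_zero, ← mul_assoc, ← zpow_natCast ε d, ← zpow_add₀ h0.ne', abs_mul,
      abs_of_pos (zpow_pos h0 _)]
    obtain ⟨n, hn⟩ : ∃ n : ℕ, d = k + n + 1 := ⟨d - k - 1, by omega⟩
    have e2 : (-(k : ℤ) + (d : ℤ)) = ((n + 1 : ℕ) : ℤ) := by subst hn; push_cast; ring
    rw [e2, zpow_natCast, pow_succ]
    have h3 : ε ^ n ≤ 1 := pow_le_one₀ h0.le h2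
    calc _ ≤ (1 * ε) * C := by gcongr
      _ = _ := by ring

lemma tuo_pt {F : ℝ → ℝ → ℝ} {f : ℝ → ℝ}
    (h : ∀ A : ℝ, 0 < A → TendstoUniformlyOn F f (nhdsWithin 0 (Ioi 0)) (Icc (-A) A)) (r : ℝ) :
    Tendsto (fun ε => F ε r) (nhdsWithin 0 (Ioi 0)) (nhds (f r)) := by
  refine (h (|r| + 1) (by positivity)).tendsto_at ?_
  constructor <;> linarith [neg_abs_le r, le_abs_self r]

lemma deriv_lim {F F' : ℝ → ℝ → ℝ} {f f' : ℝ → ℝ}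
    (h : ∀ A : ℝ, 0 < A → TendstoUniformlyOn F f (nhdsWithin 0 (Ioi 0)) (Icc (-A) A))
    (h' : ∀ A : ℝ, 0 < A → TendstoUniformlyOn F' f' (nhdsWithin 0 (Ioi 0)) (Icc (-A) A))
    (hd : ∀ ε r, HasDerivAt (F ε) (F' ε r) r) (r : ℝ) : HasDerivAt f (f' r) r := by
  have hpos : 0 < |r| + 1 := by positivity
  refine hasDerivAt_of_tendstoUniformlyOn (s := Ioo (-(|r| + 1)) (|r| + 1)) isOpen_Ioo
    ((h' _ hpos).mono Ioo_subset_Icc_self) (Eventually.of_forall fun ε x _ => hd ε x)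
    (fun x _ => tuo_pt h x) ?_
  constructor <;> linarith [neg_abs_le r, le_abs_self r]

noncomputable def hp (k : ℕ) (a : ℕ → ℕ → ℝ) : Polynomial ℝ :=
  ∑ j ∈ Finset.range (k / 2 + 1),
    Polynomial.monomial (k - 2 * j) (a (k - 2 * j) j / (k - 2 * j)! / j !)

lemma hp_eval (k : ℕ) (a : ℕ → ℕ → ℝ) (r : ℝ) : (hp k a).eval r = Q k a r 1 := by
  unfold hp Q
  rw [Polynomial.eval_finsetSum]
  apply Finset.sum_congr rfl
  intro j _
  rw [Polynomial.eval_monomial]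
  ring

lemma hp_coeff (k : ℕ) (a : ℕ → ℕ → ℝ) (j : ℕ) (hj : 2 * j ≤ k) :
    (hp k a).coeff (k - 2 * j) = a (k - 2 * j) j / (k - 2 * j)! / j ! := by
  unfold hp
  rw [Polynomial.finsetSum_coeff, Finset.sum_eq_single j]
  · simp
  · intro i hi hij
    have := Finset.mem_range.1 hi
    rw [Polynomial.coeff_monomial, if_neg (by omega)]
  · intro h
    exact absurd (Finset.mem_range.2 (by omega)) h

lemma hp_euler (k : ℕ) (u : ℝ × ℝ → ℝ) (r : ℝ) :
    r * (hp k (jet u)).derivative.eval r + 2 * Qd k 2 (dS u) r = k * (hp k (jet u)).eval r := by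
  have e1 : r * (hp k (jet u)).derivative.eval r = ∑ j ∈ Finset.range (k / 2 + 1),
      ((k : ℝ) - 2 * j) * (jet u (k - 2 * j) j / (k - 2 * j)! / j ! * r ^ (k - 2 * j)) := by
    unfold hp
    rw [Polynomial.derivative_sum, Polynomial.eval_finsetSum, Finset.mul_sum]
    apply Finset.sum_congr rfl
    intro j hj
    have hj' : 2 * j ≤ k := by
      have := Finset.mem_range.1 hj; omega
    rw [Polynomial.derivative_monomial, Polynomial.eval_monomial]
    have : ((k - 2 * j : ℕ) : ℝ) = (k : ℝ) - 2 * j := by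
      rw [Nat.cast_sub hj']; push_cast; ring
    rw [← this]
    rcases h : k - 2 * j with _ | n
    · simp
    · simp [pow_succ]; ring
  have e2 : 2 * Qd k 2 (dS u) r = ∑ j ∈ Finset.range (k / 2 + 1),
      (2 * j : ℝ) * (jet u (k - 2 * j) j / (k - 2 * j)! / j ! * r ^ (k - 2 * j)) := by
    by_cases hk : 2 ≤ k
    · obtain ⟨n, rfl⟩ : ∃ n, k = n + 2 := ⟨k - 2, by omega⟩
      rw [show (n + 2) / 2 + 1 = (n / 2 + 1) + 1 by omega, Finset.sum_range_succ']
      simp only [Qd, hk, if_true, Q, Nat.add_sub_cancel]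
      rw [Finset.mul_sum]
      simp only [Nat.cast_zero, mul_zero, zero_mul, add_zero]
      apply Finset.sum_congr rfl
      intro j _
      rw [show n + 2 - 2 * (j + 1) = n - 2 * j by omega, jet_dS, Nat.factorial_succ]
      have h2 : (j ! : ℝ) ≠ 0 := by positivity
      have h3 : ((n - 2 * j)! : ℝ) ≠ 0 := by positivity
      push_cast
      field_simp
      simp
    · rw [show k / 2 + 1 = 1 by omega]
      simp [Qd, hk]
  have e3 : k * (hp k (jet u)).eval r = ∑ j ∈ Finset.range (k / 2 + 1),
      (k : ℝ) * (jet u (k - 2 * j) j / (k - 2 * j)! / j ! * r ^ (k - 2 * j)) := by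
    unfold hp
    rw [Polynomial.eval_finsetSum, Finset.mul_sum]
    apply Finset.sum_congr rfl
    intro j hj
    rw [Polynomial.eval_monomial]
  rw [e1, e2, e3, ← Finset.sum_add_distrib]
  apply Finset.sum_congr rfl
  intro j _
  ring

lemma hermite_deg {p : Polynomial ℝ} {k : ℕ} (hp0 : p ≠ 0)
    (h : ∀ r : ℝ, p.derivative.derivative.eval r - (1 / 2) * r * p.derivative.eval r
      + ((k : ℝ) / 2) * p.eval r = 0) : p.natDegree = k := by
  have hP : p.derivative.derivative - Polynomial.C (1 / 2) * (p.derivative * Polynomial.X)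
      + Polynomial.C ((k : ℝ) / 2) * p = 0 := by
    apply Polynomial.funext
    intro r
    have := h r
    simp only [Polynomial.eval_add, Polynomial.eval_sub, Polynomial.eval_mul, Polynomial.eval_C,
      Polynomial.eval_X, Polynomial.eval_zero]
    linarith
  have hc := congrArg (fun q => Polynomial.coeff q p.natDegree) hP
  have h2 : (p.derivative * Polynomial.X).coeff p.natDegree = p.natDegree * p.leadingCoeff := by
    rcases hn : p.natDegree with _ | n
    · simp
    · rw [Polynomial.coeff_mul_X, Polynomial.coeff_derivative, Polynomial.leadingCoeff, hn]
      push_cast; ring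
  have h3 : p.derivative.derivative.coeff p.natDegree = 0 := by
    rw [Polynomial.coeff_derivative, Polynomial.coeff_derivative,
      Polynomial.coeff_eq_zero_of_natDegree_lt (by omega)]
    simp
  simp only [Polynomial.coeff_add, Polynomial.coeff_sub, Polynomial.coeff_C_mul, h2, h3,
    Polynomial.coeff_zero] at hc
  have hl : p.leadingCoeff ≠ 0 := Polynomial.leadingCoeff_ne_zero.2 hp0
  change 0 - 1 / 2 * (↑p.natDegree * p.leadingCoeff) + ↑k / 2 * p.leadingCoeff = 0 at hc
  have : ((k : ℝ) - p.natDegree) * p.leadingCoeff = 0 := by linarith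
  rcases mul_eq_zero.1 this with h | h
  · have : (k : ℝ) = p.natDegree := by linarith
    exact_mod_cast this.symm
  · exact absurd h hl

theorem blowup {u : ℝ × ℝ → ℝ} (hu : Sm u) {C δ : ℝ} (hδ : 0 < δ)
    (hF : ∀ x s, |x| ≤ δ → 0 ≤ s → s ≤ δ →
      |dS u (x, s) + dX (dX u) (x, s)| ≤ C * (|u (x, s)| + |dX u (x, s)|))
    (hne : ∃ i j, jet u i j ≠ 0) :
    ∃ (k : ℕ) (p : Polynomial ℝ), p ≠ 0 ∧ jet u k 0 ≠ 0 ∧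
      (∀ r : ℝ, p.derivative.derivative.eval r - (1 / 2) * r * p.derivative.eval r
          + ((k : ℝ) / 2) * p.eval r = 0) ∧
      (∀ A : ℝ, 0 < A →
        TendstoUniformlyOn (fun ε r => ε ^ (-(k : ℤ)) * u (ε * r, ε ^ 2))
          (fun x => p.eval x) (nhdsWithin 0 (Ioi 0)) (Icc (-A) A) ∧
        TendstoUniformlyOn (fun ε r => ε ^ (-(k : ℤ)) * (ε * dX u (ε * r, ε ^ 2)))
          (fun x => p.derivative.eval x) (nhdsWithin 0 (Ioi 0)) (Icc (-A) A) ∧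
        TendstoUniformlyOn (fun ε r => ε ^ (-(k : ℤ)) * (ε ^ 2 * dX (dX u) (ε * r, ε ^ 2)))
          (fun x => p.derivative.derivative.eval x) (nhdsWithin 0 (Ioi 0)) (Icc (-A) A)) := by
  classical
  have hex : ∃ k, ∃ i j, i + 2 * j = k ∧ jet u i j ≠ 0 := by
    obtain ⟨i, j, h⟩ := hne
    exact ⟨_, i, j, rfl, h⟩
  obtain ⟨i0, j0, hij0, hjet⟩ := Nat.find_spec hex
  set k := Nat.find hex with hk
  have hmin : ∀ i j, i + 2 * j < k → jet u i j = 0 := by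
    intro i j hij
    by_contra hne
    exact Nat.find_min hex hij ⟨i, j, rfl, hne⟩
  set p := hp k (jet u) with hpdef
  have L0 : ∀ A : ℝ, 0 < A →
      TendstoUniformlyOn (fun ε r => ε ^ (-(k : ℤ)) * u (ε * r, ε ^ 2))
      (fun x => p.eval x) (nhdsWithin 0 (Ioi 0)) (Icc (-A) A) := by
    intro A hA
    have := blow_lim hu k hmin A hA
    simpa only [hpdef, hp_eval] using this
  have L1 : ∀ A : ℝ, 0 < A →
      TendstoUniformlyOn (fun ε r => ε ^ (-(k : ℤ)) * (ε * dX u (ε * r, ε ^ 2)))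
      (Qd k 1 (dX u)) (nhdsWithin 0 (Ioi 0)) (Icc (-A) A) := by
    intro A hA
    have := blow_lim_d hu.dX k 1
      (fun i j hij => by rw [jet_dX hu]; exact hmin _ _ (by omega)) A hA
    simpa only [pow_one] using this
  have L2 : ∀ A : ℝ, 0 < A →
      TendstoUniformlyOn (fun ε r => ε ^ (-(k : ℤ)) * (ε ^ 2 * dX (dX u) (ε * r, ε ^ 2)))
      (Qd k 2 (dX (dX u))) (nhdsWithin 0 (Ioi 0)) (Icc (-A) A) := by
    intro A hA
    exact blow_lim_d hu.dX.dX k 2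
      (fun i j hij => by rw [jet_dX hu.dX, jet_dX hu]; exact hmin _ _ (by omega)) A hA
  have LS : ∀ A : ℝ, 0 < A →
      TendstoUniformlyOn (fun ε r => ε ^ (-(k : ℤ)) * (ε ^ 2 * dS u (ε * r, ε ^ 2)))
      (Qd k 2 (dS u)) (nhdsWithin 0 (Ioi 0)) (Icc (-A) A) := by
    intro A hA
    exact blow_lim_d hu.dS k 2
      (fun i j hij => by rw [jet_dS]; exact hmin _ _ (by omega)) A hA
  have hsc : ∀ ε r : ℝ, HasDerivAt (fun r => ε * r) ε r := fun ε r => by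
    simpa using (hasDerivAt_id r).const_mul ε
  have D1 : ∀ r, HasDerivAt (fun x => p.eval x) (Qd k 1 (dX u) r) r :=
    deriv_lim L0 L1 (fun ε r => by
      have h := ((hu.hX (ε * r) (ε ^ 2)).comp r (hsc ε r)).const_mul (ε ^ (-(k : ℤ)))
      refine h.congr_deriv ?_
      ring)
  have D2 : ∀ r, HasDerivAt (Qd k 1 (dX u)) (Qd k 2 (dX (dX u)) r) r :=
    deriv_lim L1 L2 (fun ε r => by
      have h := (((hu.dX.hX (ε * r) (ε ^ 2)).comp r (hsc ε r)).const_mul ε).const_mul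
        (ε ^ (-(k : ℤ)))
      refine h.congr_deriv ?_
      ring)
  have E1 : Qd k 1 (dX u) = fun x => p.derivative.eval x := by
    funext r
    exact (D1 r).unique (p.hasDerivAt r)
  have E2 : Qd k 2 (dX (dX u)) = fun x => p.derivative.derivative.eval x := by
    funext r
    have := D2 r
    rw [E1] at this
    exact this.unique (p.derivative.hasDerivAt r)
  rw [E1] at L1
  rw [E2] at L2
  have heat : ∀ r, Qd k 2 (dS u) r + p.derivative.derivative.eval r = 0 := by
    intro r
    have t1 := (tuo_pt LS r).add (tuo_pt L2 r)
    have t0 : Tendsto (fun ε : ℝ => ε) (nhdsWithin (0 : ℝ) (Ioi 0)) (nhds 0) :=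
      nhdsWithin_le_nhds
    have t2 := ((t0.mul t0).mul (tuo_pt L0 r).abs).add (t0.mul (tuo_pt L1 r).abs) |>.const_mul C
    simp only [zero_mul, mul_zero, add_zero] at t2
    have t3 : Tendsto (fun ε => ε ^ (-(k : ℤ)) * (ε ^ 2 * dS u (ε * r, ε ^ 2))
        + ε ^ (-(k : ℤ)) * (ε ^ 2 * dX (dX u) (ε * r, ε ^ 2))) (nhdsWithin (0 : ℝ) (Ioi 0))
        (nhds 0) := by
      refine squeeze_zero_norm' ?_ t2
      filter_upwards [ev_small (c := min 1 (δ / (|r| + 1))) (by positivity)] with ε hε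
      obtain ⟨h0, h1⟩ := hε
      have h11 := h1.trans_le (min_le_left _ _)
      have h12 := h1.trans_le (min_le_right _ _)
      rw [lt_div_iff₀ (by positivity)] at h12
      have hx : |ε * r| ≤ δ := by
        rw [abs_mul, abs_of_pos h0]; nlinarith [abs_nonneg r]
      have hb := hF (ε * r) (ε ^ 2) hx (by positivity) (by nlinarith [abs_nonneg r])
      have hz : 0 < ε ^ (-(k : ℤ)) := zpow_pos h0 _
      rw [Real.norm_eq_abs, show ε ^ (-(k : ℤ)) * (ε ^ 2 * dS u (ε * r, ε ^ 2))
        + ε ^ (-(k : ℤ)) * (ε ^ 2 * dX (dX u) (ε * r, ε ^ 2)) =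
        (ε ^ (-(k : ℤ)) * ε ^ 2) * (dS u (ε * r, ε ^ 2) + dX (dX u) (ε * r, ε ^ 2)) by ring,
        abs_mul, abs_of_pos (by positivity : 0 < ε ^ (-(k : ℤ)) * ε ^ 2), abs_mul, abs_mul, abs_mul,
        abs_of_pos hz, abs_of_pos h0]
      calc _ ≤ (ε ^ (-(k : ℤ)) * ε ^ 2) * (C * (|u (ε * r, ε ^ 2)| + |dX u (ε * r, ε ^ 2)|)) := by
            gcongr
        _ = _ := by ring
    exact tendsto_nhds_unique t1 t3
  have herm : ∀ r : ℝ, p.derivative.derivative.eval r - (1 / 2) * r * p.derivative.eval r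
          + ((k : ℝ) / 2) * p.eval r = 0 := by
    intro r
    have h1 := heat r
    have h2 := hp_euler k u r
    rw [← hpdef] at h2
    linarith
  have hp0 : p ≠ 0 := by
    intro h0
    have := hp_coeff k (jet u) j0 (by omega)
    rw [← hpdef, h0, Polynomial.coeff_zero, show k - 2 * j0 = i0 by omega] at this
    have h2 : (j0 ! : ℝ) ≠ 0 := by positivity
    have h3 : (i0 ! : ℝ) ≠ 0 := by positivity
    have h4 := div_ne_zero (div_ne_zero hjet h3) h2
    exact h4 this.symm
  refine ⟨k, p, hp0, ?_, herm, fun A hA => ⟨L0 A hA, L1 A hA, L2 A hA⟩⟩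
  have hdeg := hermite_deg hp0 herm
  intro hz
  have := hp_coeff k (jet u) 0 (by omega)
  rw [← hpdef] at this
  simp only [mul_zero, Nat.sub_zero, hz, zero_div] at this
  rw [← hdeg] at this
  exact hp0 (Polynomial.leadingCoeff_eq_zero.1 this)

end RL

namespace RL

open MeasureTheory

lemma aesm_of_cont {f : ℝ → ℝ} {a b : ℝ} (hab : a ≤ b) (hc : ContinuousOn f (Ioo a b)) :
    AEStronglyMeasurable f (volume.restrict (uIoc a b)) := by
  rw [uIoc_of_le hab, ← Measure.restrict_congr_set (Ioo_ae_eq_Ioc (μ := volume))]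
  exact hc.aestronglyMeasurable measurableSet_Ioo

lemma ae_Ioo {p : ℝ → Prop} {a b : ℝ} (hab : a ≤ b) (h : ∀ x ∈ Ioo a b, p x) :
    ∀ᵐ x ∂(volume : Measure ℝ), x ∈ uIoc a b → p x := by
  have : ∀ᵐ x ∂(volume : Measure ℝ), x ≠ b := by simp [ae_iff]
  filter_upwards [this] with x hx hx2
  rw [uIoc_of_le hab] at hx2
  exact h x ⟨hx2.1, lt_of_le_of_ne hx2.2 hx⟩

lemma integ {f : ℝ → ℝ} {a b M : ℝ} (hab : a ≤ b) (hc : ContinuousOn f (Ioo a b))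
    (hM : ∀ x ∈ Ioo a b, |f x| ≤ M) : IntervalIntegrable f volume a b := by
  refine (intervalIntegrable_const (c := M)).mono_fun (aesm_of_cont hab hc) ?_
  rw [Filter.EventuallyLE, ae_restrict_iff' measurableSet_uIoc]
  refine ae_Ioo hab fun x hx => ?_
  exact (hM x hx).trans (le_abs_self M)

lemma diffint {f f' : ℝ → ℝ → ℝ} {a b c d M M' t0 : ℝ} (hab : a ≤ b) (ht : t0 ∈ Ioo c d)
    (hd : ∀ x ∈ Ioo a b, ∀ t ∈ Ioo c d, HasDerivAt (fun t => f x t) (f' x t) t)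
    (hM : ∀ x ∈ Ioo a b, ∀ t ∈ Ioo c d, |f' x t| ≤ M)
    (hc : ∀ t ∈ Ioo c d, ContinuousOn (fun x => f x t) (Ioo a b))
    (hc' : ContinuousOn (fun x => f' x t0) (Ioo a b))
    (hM' : ∀ x ∈ Ioo a b, |f x t0| ≤ M') :
    HasDerivAt (fun t => ∫ x in a..b, f x t) (∫ x in a..b, f' x t0) t0 := by
  refine (intervalIntegral.hasDerivAt_integral_of_dominated_loc_of_deriv_le
    (F := fun t x => f x t) (F' := fun t x => f' x t) (bound := fun _ => M)
    (Ioo_mem_nhds ht.1 ht.2) ?_ ?_ ?_ ?_ ?_ ?_).2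
  · filter_upwards [Ioo_mem_nhds ht.1 ht.2] with t ht'
    exact aesm_of_cont hab (hc t ht')
  · exact integ hab (hc t0 ht) hM'
  · exact aesm_of_cont hab hc'
  · exact ae_Ioo hab hM
  · exact intervalIntegrable_const
  · exact ae_Ioo hab hd

lemma int_nonneg {f : ℝ → ℝ} {a b : ℝ} (hab : a ≤ b) (h : ∀ x ∈ Ioo a b, 0 ≤ f x) :
    0 ≤ ∫ x in a..b, f x := by
  rw [intervalIntegral.integral_of_le hab, integral_Ioc_eq_integral_Ioo]
  exact setIntegral_nonneg measurableSet_Ioo h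

lemma int_mono {f g : ℝ → ℝ} {a b : ℝ} (hab : a ≤ b) (hf : IntervalIntegrable f volume a b)
    (hg : IntervalIntegrable g volume a b) (h : ∀ x ∈ Ioo a b, f x ≤ g x) :
    ∫ x in a..b, f x ≤ ∫ x in a..b, g x :=
  intervalIntegral.integral_mono_on_of_le_Ioo hab hf hg h

lemma cs {f g h : ℝ → ℝ} {a b : ℝ} (hab : a ≤ b) (hf : IntervalIntegrable f volume a b)
    (hg : IntervalIntegrable g volume a b) (hh : IntervalIntegrable h volume a b)
    (hp : ∀ x ∈ Ioo a b, ∀ l : ℝ, 0 ≤ f x + 2 * l * g x + l ^ 2 * h x) :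
    (∫ x in a..b, g x) ^ 2 ≤ (∫ x in a..b, f x) * ∫ x in a..b, h x := by
  have key : ∀ l : ℝ, 0 ≤ (∫ x in a..b, h x) * (l * l) + (2 * ∫ x in a..b, g x) * l
      + ∫ x in a..b, f x := by
    intro l
    have h1 : ∫ x in a..b, (f x + 2 * l * g x + l ^ 2 * h x)
        = (∫ x in a..b, f x) + 2 * l * (∫ x in a..b, g x) + l ^ 2 * ∫ x in a..b, h x := by
      rw [intervalIntegral.integral_add (hf.add (hg.const_mul _)) (hh.const_mul _),
        intervalIntegral.integral_add hf (hg.const_mul _), intervalIntegral.integral_const_mul,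
        intervalIntegral.integral_const_mul]
    have h2 := int_mono hab (f := fun _ => 0) intervalIntegrable_const
      ((hf.add (hg.const_mul (2 * l))).add (hh.const_mul (l ^ 2))) (fun x hx => hp x hx l)
    simp only [intervalIntegral.integral_zero] at h2
    rw [h1] at h2
    linarith
  have := discrim_le_zero key
  unfold discrim at this
  nlinarith

end RL

namespace RL

open MeasureTheory

noncomputable def G (x s : ℝ) : ℝ := Real.exp (-x ^ 2 / (4 * s))

lemma G_pos (x s : ℝ) : 0 < G x s := Real.exp_pos _

lemma G_le (x s : ℝ) (hs : 0 < s) : G x s ≤ 1 := by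
  unfold G
  rw [Real.exp_le_one_iff]
  apply div_nonpos_of_nonpos_of_nonneg <;> nlinarith [sq_nonneg x]

lemma G_hs (x s : ℝ) (hs : 0 < s) :
    HasDerivAt (fun s => G x s) (x ^ 2 / (4 * s ^ 2) * G x s) s := by
  have h1 : HasDerivAt (fun s : ℝ => 4 * s) 4 s := by
    simpa using (hasDerivAt_id s).const_mul 4
  have h := ((hasDerivAt_const s (-x ^ 2)).div h1 (by positivity)).exp
  refine h.congr_deriv ?_
  simp only [G, Pi.div_apply]
  field_simp
  ring

lemma G_hx (x s : ℝ) (hs : 0 < s) :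
    HasDerivAt (fun x => G x s) (-(x / (2 * s)) * G x s) x := by
  have h := (((hasDerivAt_pow 2 x).fun_neg).div_const (4 * s)).exp
  refine h.congr_deriv ?_
  simp only [G]
  field_simp
  ring

lemma G_contOn : ContinuousOn (fun q : ℝ × ℝ => G q.1 q.2) {q | 0 < q.2} := by
  unfold G
  apply Real.continuous_exp.comp_continuousOn
  apply ContinuousOn.div
  · fun_prop
  · fun_prop
  · intro q hq
    have : 0 < q.2 := hq
    positivity

lemma G_cont (s : ℝ) : Continuous (fun x => G x s) := by
  unfold G; fun_prop

lemma Sm.cx {f : ℝ × ℝ → ℝ} (hf : Sm f) (s : ℝ) : Continuous (fun x => f (x, s)) :=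
  hf.continuous.comp (by fun_prop)

lemma ftc {g g' : ℝ → ℝ} {a b : ℝ} (h : ∀ x, HasDerivAt g (g' x) x) (hc : Continuous g') :
    ∫ x in a..b, g' x = g b - g a :=
  intervalIntegral.integral_eq_sub_of_hasDerivAt (fun x _ => h x) (hc.intervalIntegrable _ _)

noncomputable def J (δ s : ℝ) (g : ℝ → ℝ) : ℝ := ∫ x in (-δ)..δ, g x * G x s

lemma J_lin (δ s : ℝ) {f g : ℝ → ℝ} (hf : Continuous f) (hg : Continuous g) (a b : ℝ) :
    J δ s (fun x => a * f x + b * g x) = a * J δ s f + b * J δ s g := by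
  unfold J
  have hG := G_cont s
  rw [← intervalIntegral.integral_const_mul, ← intervalIntegral.integral_const_mul,
    ← intervalIntegral.integral_add]
  · congr 1; funext x; ring
  · exact Continuous.intervalIntegrable (by fun_prop) _ _
  · exact Continuous.intervalIntegrable (by fun_prop) _ _

lemma J_mono {δ s : ℝ} (hδ : 0 < δ) {f g : ℝ → ℝ} (hf : Continuous f) (hg : Continuous g)
    (h : ∀ x, |x| ≤ δ → f x ≤ g x) : J δ s f ≤ J δ s g := by
  have hG := G_cont s
  apply int_mono (by linarith)
  · exact Continuous.intervalIntegrable (by fun_prop) _ _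
  · exact Continuous.intervalIntegrable (by fun_prop) _ _
  · intro x hx
    have := h x (abs_le.2 ⟨hx.1.le, hx.2.le⟩)
    have := G_pos x s
    gcongr

/-- derivative of the weighted L2 norm -/
lemma HD {f : ℝ × ℝ → ℝ} (hf : Sm f) {δ s : ℝ} (hδ : 0 < δ) (hs : 0 < s) :
    HasDerivAt (fun s => J δ s (fun x => f (x, s) ^ 2))
      (2 * J δ s (fun x => f (x, s) * (dS f (x, s) + x / (2 * s) * dX f (x, s)))
        + 1 / (2 * s) * J δ s (fun x => f (x, s) ^ 2)
        - δ / (2 * s) * (f (δ, s) ^ 2 + f (-δ, s) ^ 2) * G δ s) s := by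
  have c0 := hf.cx s
  have cS := hf.dS.cx s
  have cX := hf.dX.cx s
  have hG := G_cont s
  set K := Icc (-δ) δ ×ˢ Icc (s / 2) (2 * s) with hK
  have hKc : IsCompact K := isCompact_Icc.prod isCompact_Icc
  have hKs : K ⊆ {q | 0 < q.2} := fun q hq => lt_of_lt_of_le (by positivity) hq.2.1
  have hGK : ContinuousOn (fun q : ℝ × ℝ => G q.1 q.2) K := G_contOn.mono hKs
  have C0 := hf.continuous
  have CS := hf.dS.continuous
  obtain ⟨M, hM⟩ := hKc.exists_bound_of_continuousOn
    (f := fun q : ℝ × ℝ => (2 * f q * dS f q) * G q.1 q.2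
      + f q ^ 2 * (q.1 ^ 2 / (4 * q.2 ^ 2) * G q.1 q.2)) (by
      apply ContinuousOn.add
      · exact ContinuousOn.mul (by fun_prop) hGK
      · refine ContinuousOn.mul (by fun_prop) (ContinuousOn.mul ?_ hGK)
        refine ContinuousOn.div (by fun_prop) (by fun_prop) ?_
        intro q hq
        have : 0 < q.2 := hKs hq
        positivity)
  obtain ⟨M', hM'⟩ := hKc.exists_bound_of_continuousOn
    (f := fun q : ℝ × ℝ => f q ^ 2 * G q.1 q.2) (ContinuousOn.mul (by fun_prop) hGK)
  have key := diffint (f := fun x s => f (x, s) ^ 2 * G x s)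
    (f' := fun x s => (2 * f (x, s) * dS f (x, s)) * G x s
      + f (x, s) ^ 2 * (x ^ 2 / (4 * s ^ 2) * G x s))
    (a := -δ) (b := δ) (c := s / 2) (d := 2 * s) (M := M) (M' := M') (t0 := s)
    (by linarith) ⟨by linarith, by linarith⟩
    (fun x hx t ht => by
      have ht0 : 0 < t := lt_trans (by positivity) ht.1
      have h := (((hf.hS x t).fun_pow 2).mul (G_hs x t ht0))
      refine h.congr_deriv ?_
      simp)
    (fun x hx t ht => hM (x, t) ⟨⟨hx.1.le, hx.2.le⟩, ⟨ht.1.le, ht.2.le⟩⟩)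
    (fun t ht => by
      have := hf.cx t
      have := G_cont t
      exact Continuous.continuousOn (by fun_prop))
    (Continuous.continuousOn (by fun_prop))
    (fun x hx => hM' (x, s) ⟨⟨hx.1.le, hx.2.le⟩, ⟨by linarith, by linarith⟩⟩)
  refine key.congr_deriv ?_
  have hF := ftc (a := -δ) (b := δ) (g := fun x => -(x / (2 * s)) * (f (x, s) ^ 2 * G x s))
    (g' := fun x => -(1 / (2 * s)) * (f (x, s) ^ 2 * G x s)
      + (-(x / (2 * s))) * ((2 * f (x, s) * dX f (x, s)) * G x s
        + f (x, s) ^ 2 * (-(x / (2 * s)) * G x s)))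
    (fun x => by
      have h := (((hasDerivAt_id x).div_const (2 * s)).fun_neg).mul
        (((hf.hX x s).fun_pow 2).mul (G_hx x s hs))
      refine h.congr_deriv ?_
      simp) (by fun_prop)
  have hGe : G (-δ) s = G δ s := by simp [G]
  rw [hGe] at hF
  have e : 2 * J δ s (fun x => f (x, s) * (dS f (x, s) + x / (2 * s) * dX f (x, s)))
        + 1 / (2 * s) * J δ s (fun x => f (x, s) ^ 2)
      = J δ s (fun x => 2 * (f (x, s) * (dS f (x, s) + x / (2 * s) * dX f (x, s)))
        + 1 / (2 * s) * f (x, s) ^ 2) := by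
    rw [J_lin] <;> fun_prop
  rw [e]
  have e2 : ∫ x in (-δ)..δ, ((2 * f (x, s) * dS f (x, s)) * G x s
      + f (x, s) ^ 2 * (x ^ 2 / (4 * s ^ 2) * G x s))
      = (∫ x in (-δ)..δ, (2 * (f (x, s) * (dS f (x, s) + x / (2 * s) * dX f (x, s)))
        + 1 / (2 * s) * f (x, s) ^ 2) * G x s)
      + ∫ x in (-δ)..δ, (-(1 / (2 * s)) * (f (x, s) ^ 2 * G x s)
      + (-(x / (2 * s))) * ((2 * f (x, s) * dX f (x, s)) * G x s
        + f (x, s) ^ 2 * (-(x / (2 * s)) * G x s))) := by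
    rw [← intervalIntegral.integral_add]
    · congr 1; funext x; field_simp; ring
    · exact Continuous.intervalIntegrable (by fun_prop) _ _
    · exact Continuous.intervalIntegrable (by fun_prop) _ _
  rw [e2, hF]
  simp only [J]
  ring

/-- integration by parts -/
lemma IBP {u : ℝ × ℝ → ℝ} (hu : Sm u) {δ s : ℝ} (hs : 0 < s) {g g' : ℝ → ℝ}
    (hg : ∀ x, HasDerivAt g (g' x) x) (hc : Continuous g) (hc' : Continuous g') :
    J δ s (fun x => g' x * dX u (x, s)) +
      J δ s (fun x => g x * (dX (dX u) (x, s) - x / (2 * s) * dX u (x, s)))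
    = (g δ * dX u (δ, s) - g (-δ) * dX u (-δ, s)) * G δ s := by
  have cX := hu.dX.cx s
  have cXX := hu.dX.dX.cx s
  have hG := G_cont s
  have hF := ftc (a := -δ) (b := δ) (g := fun x => g x * (dX u (x, s) * G x s))
    (g' := fun x => g' x * (dX u (x, s) * G x s) +
      g x * (dX (dX u) (x, s) * G x s + dX u (x, s) * (-(x / (2 * s)) * G x s)))
    (fun x => (hg x).mul ((hu.dX.hX x s).mul (G_hx x s hs))) (by fun_prop)
  have hGe : G (-δ) s = G δ s := by simp [G]
  rw [hGe] at hF
  unfold J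
  rw [← intervalIntegral.integral_add]
  · rw [show (g δ * dX u (δ, s) - g (-δ) * dX u (-δ, s)) * G δ s =
      g δ * (dX u (δ, s) * G δ s) - g (-δ) * (dX u (-δ, s) * G δ s) by ring, ← hF]
    congr 1; funext x; ring
  · exact Continuous.intervalIntegrable (by fun_prop) _ _
  · exact Continuous.intervalIntegrable (by fun_prop) _ _

lemma bdry_bound {δ s : ℝ} (hδ : 0 < δ) (hs : 0 < s) :
    1 / s * G δ s ≤ 8 / δ ^ 2 * Real.exp (-δ ^ 2 / (8 * s)) ∧
      G δ s ≤ Real.exp (-δ ^ 2 / (8 * s)) := by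
  have e : G δ s = Real.exp (-δ ^ 2 / (8 * s)) * Real.exp (-δ ^ 2 / (8 * s)) := by
    unfold G; rw [← Real.exp_add]; congr 1; field_simp; ring
  set E := Real.exp (-δ ^ 2 / (8 * s)) with hE
  have hE0 : 0 < E := Real.exp_pos _
  have hE1 : E ≤ 1 := by
    rw [hE, Real.exp_le_one_iff]
    apply div_nonpos_of_nonpos_of_nonneg <;> nlinarith [sq_nonneg δ]
  constructor
  · have h1 : δ ^ 2 / (8 * s) ≤ Real.exp (δ ^ 2 / (8 * s)) := by
      linarith [Real.add_one_le_exp (δ ^ 2 / (8 * s))]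
    have h2 : Real.exp (δ ^ 2 / (8 * s)) * E = 1 := by
      rw [hE, ← Real.exp_add]; simp [neg_div]
    have h3 : δ ^ 2 / (8 * s) * E ≤ 1 := by nlinarith
    rw [e]
    calc 1 / s * (E * E) = 8 / δ ^ 2 * ((δ ^ 2 / (8 * s) * E) * E) := by field_simp
      _ ≤ 8 / δ ^ 2 * (1 * E) := by gcongr
      _ = _ := by ring
  · rw [e]; nlinarith

end RL

namespace RL

open MeasureTheory

lemma pw1 {C a b F : ℝ} (h1 : |F| ≤ C * (|a| + |b|)) :
    F ^ 2 ≤ 2 * C ^ 2 * a ^ 2 + 2 * C ^ 2 * b ^ 2 := by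
  have h2 : F ^ 2 ≤ (C * (|a| + |b|)) ^ 2 :=
    sq_le_sq' (by linarith [abs_le.1 h1]) (abs_le.1 h1).2
  have h3 : (|a| + |b|) ^ 2 ≤ 2 * (a ^ 2 + b ^ 2) := by
    rw [← sq_abs a, ← sq_abs b]
    nlinarith [sq_nonneg (|a| - |b|)]
  have h4 : C ^ 2 * (|a| + |b|) ^ 2 ≤ C ^ 2 * (2 * (a ^ 2 + b ^ 2)) := by gcongr
  linarith [mul_pow C (|a| + |b|) 2]

lemma pw2 {C a b F : ℝ} (hC : 0 ≤ C) (h1 : |F| ≤ C * (|a| + |b|)) :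
    |a * F| ≤ 2 * C * a ^ 2 + 2 * C * b ^ 2 := by
  rw [abs_mul, ← sq_abs a, ← sq_abs b]
  have h2 : |a| * |F| ≤ |a| * (C * (|a| + |b|)) := by gcongr
  have h3 : |a| * (|a| + |b|) ≤ 2 * (|a| ^ 2 + |b| ^ 2) := by
    nlinarith [sq_nonneg (|a| - |b|)]
  have h4 : C * (|a| * (|a| + |b|)) ≤ C * (2 * (|a| ^ 2 + |b| ^ 2)) := by gcongr
  linarith

set_option maxHeartbeats 2000000 in
lemma freq_data {u : ℝ × ℝ → ℝ} (hu : Sm u) {C δ : ℝ} (hC : 0 ≤ C) (hδ : 0 < δ) (hδ1 : δ ≤ 1)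
    (hF : ∀ x s, |x| ≤ δ → 0 ≤ s → s ≤ δ →
      |dS u (x, s) + dX (dX u) (x, s)| ≤ C * (|u (x, s)| + |dX u (x, s)|)) :
    ∃ K, 0 ≤ K ∧ ∀ s, 0 < s → s ≤ δ → ∃ H D A1 A2 A4 A5 e1 e2 e3 : ℝ,
      H = J δ s (fun x => u (x, s) ^ 2) ∧ D = J δ s (fun x => dX u (x, s) ^ 2) ∧
      0 ≤ D ∧
      HasDerivAt (fun s => J δ s (fun x => u (x, s) ^ 2)) (2 * A1 + 1 / (2 * s) * H + e1) s ∧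
      HasDerivAt (fun s => J δ s (fun x => dX u (x, s) ^ 2))
        (2 * A2 - 1 / (2 * s) * D + e3) s ∧
      D = A1 - A4 + e2 ∧ (A1 - A4 / 2) ^ 2 ≤ H * (A2 + A5 / 4) ∧
      A5 ≤ 2 * C ^ 2 * (H + D) ∧ |A4| ≤ 2 * C * (H + D) ∧
      |e1| ≤ K * Real.exp (-δ ^ 2 / (8 * s)) ∧ |e2| ≤ K * Real.exp (-δ ^ 2 / (8 * s)) ∧
      |e3| ≤ K * Real.exp (-δ ^ 2 / (8 * s)) := by
  obtain ⟨M0, hM0, hb0⟩ := hu.bdd 1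
  obtain ⟨M1, hM1, hb1⟩ := hu.dX.bdd 1
  obtain ⟨M2, hM2, hb2⟩ := hu.dS.bdd 1
  obtain ⟨M, hM, hb⟩ : ∃ M, 0 ≤ M ∧ ∀ x ∈ Icc (-1 : ℝ) 1, ∀ s ∈ Icc (-1 : ℝ) 1,
      |u (x, s)| ≤ M ∧ |dX u (x, s)| ≤ M ∧ |dS u (x, s)| ≤ M := by
    refine ⟨M0 + M1 + M2, by positivity, fun x hx s hs => ⟨?_, ?_, ?_⟩⟩
    · linarith [hb0 x hx s hs]
    · linarith [hb1 x hx s hs]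
    · linarith [hb2 x hx s hs]
  set K1 := 8 / δ ^ 2 with hK1
  have hK1p : 0 ≤ K1 := by positivity
  refine ⟨10 * M ^ 2 * (K1 + 1), by positivity, fun s hs hsδ => ?_⟩
  have c0 := hu.cx s
  have cS := hu.dS.cx s
  have cX := hu.dX.cx s
  have cXX := hu.dX.dX.cx s
  have cXS := hu.dS.dX.cx s
  have hG := G_cont s
  have hs1 : s ∈ Icc (-1 : ℝ) 1 := ⟨by linarith, by linarith⟩
  obtain ⟨p0, p1, p2⟩ := hb δ ⟨by linarith, by linarith⟩ s hs1
  obtain ⟨q0, q1, q2⟩ := hb (-δ) ⟨by linarith, by linarith⟩ s hs1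
  obtain ⟨hB1, hB2⟩ := bdry_bound hδ hs
  set E := Real.exp (-δ ^ 2 / (8 * s)) with hE
  have hE0 : 0 < E := Real.exp_pos _
  have hGp := G_pos δ s
  set Z : ℝ → ℝ := fun x => dS u (x, s) + x / (2 * s) * dX u (x, s) with hZ
  set F : ℝ → ℝ := fun x => dS u (x, s) + dX (dX u) (x, s) with hFdef
  have cZ : Continuous Z := by rw [hZ]; fun_prop
  have cF : Continuous F := by rw [hFdef]; fun_prop
  have hZd : ∀ x, HasDerivAt Z (dX (dS u) (x, s) + (1 / (2 * s) * dX u (x, s)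
      + x / (2 * s) * dX (dX u) (x, s))) x := fun x =>
    (hu.dS.hX x s).add (((hasDerivAt_id x).div_const (2 * s)).mul (hu.dX.hX x s))
  have i1 := IBP hu (δ := δ) hs (g := fun x => u (x, s)) (fun x => hu.hX x s) c0 cX
  have i2 := IBP hu (δ := δ) hs hZd cZ (by fun_prop)
  have d1 := HD hu hδ hs
  have d2 := HD hu.dX hδ hs
  have r1 : (fun x => u (x, s) * (dX (dX u) (x, s) - x / (2 * s) * dX u (x, s)))
      = fun x => 1 * (u (x, s) * F x) + (-1) * (u (x, s) * Z x) := by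
    funext x; simp only [hFdef, hZ]; ring
  rw [r1, J_lin δ s (by fun_prop) (by fun_prop)] at i1
  have r2 : (fun x => Z x * (dX (dX u) (x, s) - x / (2 * s) * dX u (x, s)))
      = fun x => (-1) * (Z x ^ 2 - F x * Z x) + 0 * 0 := by
    funext x; simp only [hFdef, hZ]; ring
  rw [r2, J_lin δ s (by fun_prop) (by fun_prop)] at i2
  have r3 : (fun x => (dX (dS u) (x, s) + (1 / (2 * s) * dX u (x, s)
      + x / (2 * s) * dX (dX u) (x, s))) * dX u (x, s))
      = fun x => 1 * (dX u (x, s) * (dS (dX u) (x, s) + x / (2 * s) * dX (dX u) (x, s)))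
        + 1 / (2 * s) * (dX u (x, s) ^ 2) := by
    rw [hu.comm]
    funext x; ring
  have cSX := hu.dX.dS.cx s
  rw [r3, J_lin δ s (by fun_prop) (by fun_prop)] at i2
  have r4 : (fun x => dX u (x, s) * dX u (x, s)) = fun x => dX u (x, s) ^ 2 := by
    funext x; ring
  rw [r4] at i1
  refine ⟨_, _, J δ s (fun x => u (x, s) * Z x), J δ s (fun x => Z x ^ 2 - F x * Z x),
    J δ s (fun x => u (x, s) * F x), J δ s (fun x => F x ^ 2),
    -(δ / (2 * s) * (u (δ, s) ^ 2 + u (-δ, s) ^ 2) * G δ s),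
    (u (δ, s) * dX u (δ, s) - u (-δ, s) * dX u (-δ, s)) * G δ s,
    2 * ((Z δ * dX u (δ, s) - Z (-δ) * dX u (-δ, s)) * G δ s)
      - (δ / (2 * s) * (dX u (δ, s) ^ 2 + dX u (-δ, s) ^ 2) * G δ s),
    rfl, rfl, ?_, ?_, ?_, ?_, ?_, ?_, ?_, ?_, ?_, ?_⟩
  · exact int_nonneg (by linarith) (fun x _ => mul_nonneg (sq_nonneg _) (G_pos x s).le)
  · exact d1.congr_deriv (by ring)
  · refine d2.congr_deriv ?_
    have : 1 / (2 * s) = 1 / s - 1 / (2 * s) := by field_simp; ring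
    linear_combination 2 * i2
  · linarith
  · have hcs := cs (a := -δ) (b := δ) (by linarith) (f := fun x => u (x, s) ^ 2 * G x s)
      (g := fun x => (1 * (u (x, s) * Z x) + (-1 / 2) * (u (x, s) * F x)) * G x s)
      (h := fun x => (1 * (Z x ^ 2 - F x * Z x) + (1 / 4) * F x ^ 2) * G x s)
      (Continuous.intervalIntegrable (by fun_prop) _ _)
      (Continuous.intervalIntegrable (by fun_prop) _ _)
      (Continuous.intervalIntegrable (by fun_prop) _ _)
      (fun x _ l => by
        have h1 : 0 ≤ (u (x, s) + l * (Z x - F x / 2)) ^ 2 * G x s :=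
          mul_nonneg (sq_nonneg _) (G_pos x s).le
        linarith)
    have l1 := J_lin δ s (f := fun x => u (x, s) * Z x) (g := fun x => u (x, s) * F x)
      (by fun_prop) (by fun_prop) 1 (-1 / 2)
    have l2 := J_lin δ s (f := fun x => Z x ^ 2 - F x * Z x) (g := fun x => F x ^ 2)
      (by fun_prop) (by fun_prop) 1 (1 / 4)
    change (J δ s (fun x => 1 * (u (x, s) * Z x) + (-1 / 2) * (u (x, s) * F x))) ^ 2 ≤
      J δ s (fun x => u (x, s) ^ 2) * J δ s (fun x => 1 * (Z x ^ 2 - F x * Z x) + (1 / 4) * F x ^ 2)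
      at hcs
    rw [l1, l2] at hcs
    refine le_trans (le_of_eq ?_) (hcs.trans (le_of_eq ?_)) <;> ring
  · have := J_mono (s := s) hδ (f := fun x => F x ^ 2)
      (g := fun x => 2 * C ^ 2 * u (x, s) ^ 2 + 2 * C ^ 2 * dX u (x, s) ^ 2)
      (by fun_prop) (by fun_prop) (fun x hx => pw1 (hF x s hx hs.le hsδ))
    rw [J_lin δ s (by fun_prop) (by fun_prop)] at this
    linarith
  · have hpt : ∀ x, |x| ≤ δ → |u (x, s) * F x| ≤
        2 * C * u (x, s) ^ 2 + 2 * C * dX u (x, s) ^ 2 := fun x hx => pw2 hC (hF x s hx hs.le hsδ)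
    have g1 := J_mono (s := s) hδ (f := fun x => u (x, s) * F x)
      (g := fun x => 2 * C * u (x, s) ^ 2 + 2 * C * dX u (x, s) ^ 2)
      (by fun_prop) (by fun_prop) (fun x hx => (abs_le.1 (hpt x hx)).2)
    have g2 := J_mono (s := s) hδ (g := fun x => u (x, s) * F x)
      (f := fun x => -(2 * C) * u (x, s) ^ 2 + -(2 * C) * dX u (x, s) ^ 2)
      (by fun_prop) (by fun_prop) (fun x hx => by linarith [(abs_le.1 (hpt x hx)).1])
    rw [J_lin δ s (by fun_prop) (by fun_prop)] at g1 g2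
    rw [abs_le]; constructor <;> linarith
  all_goals
    have sqM : ∀ y : ℝ, |y| ≤ M → y ^ 2 ≤ M ^ 2 := fun y hy =>
      sq_le_sq' (by linarith [abs_le.1 hy]) (abs_le.1 hy).2
    have prM : ∀ y z : ℝ, |y| ≤ M → |z| ≤ M → |y * z| ≤ M ^ 2 := fun y z hy hz => by
      rw [abs_mul, sq]; gcongr
    have hδs : ∀ W : ℝ, 0 ≤ W → δ / (2 * s) * W * G δ s ≤ W * (K1 * E) := fun W hW => by
      have : δ / (2 * s) * W * G δ s = (δ / 2) * W * (1 / s * G δ s) := by field_simp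
      rw [this]
      calc _ ≤ 1 * W * (K1 * E) := by gcongr; linarith
        _ = _ := by ring
    have hE' : 0 ≤ K1 * E := by positivity
    have hM2 : 0 ≤ M ^ 2 * E := by positivity
    have hM3 : 0 ≤ M ^ 2 * K1 * E := by positivity
  · have h1 := hδs (u (δ, s) ^ 2 + u (-δ, s) ^ 2) (by positivity)
    have h2 := sqM _ p0
    have h3 := sqM _ q0
    rw [abs_neg, abs_of_nonneg (by positivity)]
    refine h1.trans ?_
    nlinarith
  · have h2 := prM _ _ p0 p1
    have h3 := prM _ _ q0 q1
    rw [abs_mul, abs_of_pos hGp]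
    have h4 := abs_sub (u (δ, s) * dX u (δ, s)) (u (-δ, s) * dX u (-δ, s))
    calc _ ≤ (2 * M ^ 2) * E := by gcongr; linarith
      _ ≤ _ := by nlinarith
  · have h1 := hδs (dX u (δ, s) ^ 2 + dX u (-δ, s) ^ 2) (by positivity)
    have h10 : 0 ≤ δ / (2 * s) * (dX u (δ, s) ^ 2 + dX u (-δ, s) ^ 2) * G δ s := by positivity
    have h2 := sqM _ p1
    have h3 := sqM _ q1
    have h4 := prM _ _ p2 p1
    have h5 := prM _ _ q2 q1
    have e : 2 * ((Z δ * dX u (δ, s) - Z (-δ) * dX u (-δ, s)) * G δ s)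
      - (δ / (2 * s) * (dX u (δ, s) ^ 2 + dX u (-δ, s) ^ 2) * G δ s)
      = 2 * (dS u (δ, s) * dX u (δ, s) - dS u (-δ, s) * dX u (-δ, s)) * G δ s
       + (δ / (2 * s) * (dX u (δ, s) ^ 2 + dX u (-δ, s) ^ 2) * G δ s) := by
      simp only [hZ]; ring
    rw [e]
    have h6 := abs_sub (dS u (δ, s) * dX u (δ, s)) (dS u (-δ, s) * dX u (-δ, s))
    refine (abs_add_le _ _).trans ?_
    rw [abs_of_nonneg h10, abs_mul, abs_of_pos hGp, abs_mul, abs_of_pos (by norm_num : (0:ℝ) < 2)]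
    have h7 : 2 * |dS u (δ, s) * dX u (δ, s) - dS u (-δ, s) * dX u (-δ, s)| * G δ s
        ≤ 2 * (2 * M ^ 2) * E := by gcongr; linarith
    have h8 : (dX u (δ, s) ^ 2 + dX u (-δ, s) ^ 2) * (K1 * E) ≤ (2 * M ^ 2) * (K1 * E) := by
      gcongr; linarith
    nlinarith

end RL

namespace RL

open MeasureTheory

lemma freq_alg {C K s H D A1 A2 A4 A5 e1 e2 e3 : ℝ} (hC : 0 ≤ C) (hK : 0 ≤ K) (hs : 0 < s)
    (hs1 : s ≤ 1) (hH : 0 < H) (hD : 0 ≤ D) (h1 : D = A1 - A4 + e2)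
    (h2 : (A1 - A4 / 2) ^ 2 ≤ H * (A2 + A5 / 4)) (h3 : A5 ≤ 2 * C ^ 2 * (H + D))
    (h4 : |A4| ≤ 2 * C * (H + D)) (k1 : |e1| ≤ K * H) (k2 : |e2| ≤ K * H) (k3 : |e3| ≤ K * H) :
    |A1| ≤ (1 + 2 * C + K) * (H + D) ∧
    -(C ^ 2 + 2 * K * (1 + 2 * C + K) + K) * (H * (H + s * D)) ≤
      (D + s * (2 * A2 - 1 / (2 * s) * D + e3)) * H
        - s * D * (2 * A1 + 1 / (2 * s) * H + e1) := by
  have hA1 : |A1| ≤ (1 + 2 * C + K) * (H + D) := by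
    have e : A1 = D + A4 - e2 := by linarith
    have t1 : |A1| ≤ D + |A4| + |e2| := by
      rw [e]
      refine (abs_sub _ _).trans ?_
      have := abs_add_le D A4
      rw [abs_of_nonneg hD] at this
      linarith
    have : 0 ≤ K * D := by positivity
    linarith
  refine ⟨hA1, ?_⟩
  have e : (D + s * (2 * A2 - 1 / (2 * s) * D + e3)) * H
        - s * D * (2 * A1 + 1 / (2 * s) * H + e1)
        = s * (2 * (H * A2 - A1 * D) + e3 * H - e1 * D) := by
    field_simp; ring
  rw [e]
  have e2' : A1 * D = (A1 - A4 / 2) ^ 2 - A4 ^ 2 / 4 + A1 * e2 := by rw [h1]; ring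
  have b1 : A1 * e2 ≤ ((1 + 2 * C + K) * (H + D)) * (K * H) := by
    refine (le_abs_self _).trans ?_
    rw [abs_mul]; gcongr
  have b2 : A5 * H ≤ 2 * C ^ 2 * (H + D) * H := by gcongr
  have b3 : -(K * H) * H ≤ e3 * H := by gcongr; exact (abs_le.1 k3).1
  have b4 : e1 * D ≤ (K * H) * D := by gcongr; exact (abs_le.1 k1).2
  have main : -(C ^ 2 + 2 * K * (1 + 2 * C + K) + K) * (H * (H + D)) ≤
      2 * (H * A2 - A1 * D) + e3 * H - e1 * D := by
    nlinarith [sq_nonneg A4]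
  have m2 := mul_le_mul_of_nonneg_left main hs.le
  refine le_trans ?_ m2
  have hc : 0 ≤ C ^ 2 + 2 * K * (1 + 2 * C + K) + K := by positivity
  have : s * (H * (H + D)) ≤ H * (H + s * D) := by nlinarith [mul_pos hH hH]
  nlinarith [mul_le_mul_of_nonneg_left this hc]

lemma freq_ode {H D : ℝ → ℝ} {C K s1 : ℝ} (hC : 0 ≤ C) (hK : 0 ≤ K) (hs1 : 0 < s1)
    (hs1' : s1 ≤ 1) (h : ∀ s ∈ Ioc 0 s1, 0 < H s ∧ 0 ≤ D s ∧ ∃ A1 A2 A4 A5 e1 e2 e3 : ℝ,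
      HasDerivAt H (2 * A1 + 1 / (2 * s) * H s + e1) s ∧
      HasDerivAt D (2 * A2 - 1 / (2 * s) * D s + e3) s ∧
      D s = A1 - A4 + e2 ∧ (A1 - A4 / 2) ^ 2 ≤ H s * (A2 + A5 / 4) ∧
      A5 ≤ 2 * C ^ 2 * (H s + D s) ∧ |A4| ≤ 2 * C * (H s + D s) ∧
      |e1| ≤ K * H s ∧ |e2| ≤ K * H s ∧ |e3| ≤ K * H s) :
    ∃ (L : ℕ) (c : ℝ), 0 < c ∧ ∀ s ∈ Ioc 0 s1, c * s ^ L ≤ H s := by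
  set K3 := C ^ 2 + 2 * K * (1 + 2 * C + K) + K with hK3
  have hK3p : 0 ≤ K3 := by positivity
  set φ : ℝ → ℝ := fun s => Real.exp (K3 * s) * (1 + s * D s / H s) with hφ
  have hφd : ∀ s ∈ Ioc 0 s1, ∃ d, 0 ≤ d ∧ HasDerivAt φ d s := by
    intro s hs
    obtain ⟨hH, hD, A1, A2, A4, A5, e1, e2, e3, d1, d2, h1, h2, h3, h4, k1, k2, k3⟩ := h s hs
    have alg := (freq_alg hC hK hs.1 (hs.2.trans hs1') hH hD h1 h2 h3 h4 k1 k2 k3).2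
    have e1' : HasDerivAt (fun s => Real.exp (K3 * s)) (Real.exp (K3 * s) * K3) s := by
      simpa using ((hasDerivAt_id s).const_mul K3).exp
    have dd := e1'.mul ((((hasDerivAt_id s).mul d2).div d1 hH.ne').const_add 1)
    refine ⟨_, ?_, dd⟩
    simp only [id, Pi.div_apply, Pi.mul_apply, one_mul]
    rw [mul_assoc, ← mul_add]
    refine mul_nonneg (Real.exp_pos _).le ?_
    have : K3 * (1 + s * D s / H s) = K3 * (H s * (H s + s * D s)) / H s ^ 2 := by
      field_simp
    rw [this, ← add_div]
    apply div_nonneg _ (sq_nonneg _)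
    linarith
  have hφm : MonotoneOn φ (Ioc 0 s1) := by
    apply monotoneOn_of_deriv_nonneg (convex_Ioc 0 s1)
    · intro s hs
      obtain ⟨d, _, hd⟩ := hφd s hs
      exact hd.continuousAt.continuousWithinAt
    · intro s hs
      obtain ⟨d, _, hd⟩ := hφd s (interior_subset hs)
      exact hd.differentiableAt.differentiableWithinAt
    · intro s hs
      obtain ⟨d, hd0, hd⟩ := hφd s (interior_subset hs)
      rw [hd.deriv]; exact hd0
  set M := φ s1 with hM
  have hN : ∀ s ∈ Ioc 0 s1, s * D s ≤ M * H s := by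
    intro s hs
    have hm := hφm hs ⟨hs1, le_rfl⟩ hs.2
    obtain ⟨hH, hD, -⟩ := h s hs
    have h1 : 1 ≤ Real.exp (K3 * s) := Real.one_le_exp (mul_nonneg hK3p hs.1.le)
    have h2 : 0 ≤ s * D s / H s := by have := hs.1; positivity
    have h3 : s * D s / H s ≤ M := by
      refine le_trans ?_ hm
      simp only [hφ]
      nlinarith
    rwa [div_le_iff₀ hH] at h3
  obtain ⟨L, hL⟩ := exists_nat_ge (2 * (1 + 2 * C + K) * (1 + M) + 1 / 2 + K)
  set ψ : ℝ → ℝ := fun s => H s * Real.exp (-L * Real.log s) with hψ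
  have hψd : ∀ s ∈ Ioc 0 s1, ∃ d, d ≤ 0 ∧ HasDerivAt ψ d s := by
    intro s hs
    have hs' := hN s hs
    obtain ⟨hH, hD, A1, A2, A4, A5, e1, e2, e3, d1, d2, h1, h2, h3, h4, k1, k2, k3⟩ := h s hs
    have alg := (freq_alg hC hK hs.1 (hs.2.trans hs1') hH hD h1 h2 h3 h4 k1 k2 k3).1
    have e1' : HasDerivAt (fun s => Real.exp (-L * Real.log s))
        (Real.exp (-L * Real.log s) * (-L * s⁻¹)) s :=
      ((Real.hasDerivAt_log hs.1.ne').const_mul (-(L : ℝ))).exp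
    refine ⟨_, ?_, d1.mul e1'⟩
    have hsp := hs.1
    have e : (2 * A1 + 1 / (2 * s) * H s + e1) * Real.exp (-L * Real.log s)
      + H s * (Real.exp (-L * Real.log s) * (-L * s⁻¹))
      = - (L * H s - (2 * (s * A1) + 1 / 2 * H s + s * e1)) * s⁻¹ * Real.exp (-L * Real.log s) := by
      field_simp; ring
    rw [e]
    have key : 2 * (s * A1) + 1 / 2 * H s + s * e1 ≤ L * H s := by
      have t1 : s * A1 ≤ s * ((1 + 2 * C + K) * (H s + D s)) := by
        gcongr; exact (abs_le.1 alg).2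
      have t2 : s * H s ≤ H s := by nlinarith [hs.2]
      have t3 : s * e1 ≤ K * H s := by
        have := (abs_le.1 k1).2
        have hkh : 0 ≤ K * H s := by positivity
        have h5 : s ≤ 1 := hs.2.trans hs1'
        calc s * e1 ≤ s * (K * H s) := by gcongr
          _ ≤ 1 * (K * H s) := by gcongr
          _ = _ := by ring
      have t4 := mul_le_mul_of_nonneg_right hL hH.le
      have t5 : (1 + 2 * C + K) * (s * H s + s * D s) ≤ (1 + 2 * C + K) * (H s + M * H s) := by
        gcongr
      linarith
    have : 0 ≤ (L * H s - (2 * (s * A1) + 1 / 2 * H s + s * e1)) * s⁻¹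
        * Real.exp (-L * Real.log s) := by
      have : 0 ≤ L * H s - (2 * (s * A1) + 1 / 2 * H s + s * e1) := by linarith
      positivity
    linarith
  have hψm : AntitoneOn ψ (Ioc 0 s1) := by
    apply antitoneOn_of_deriv_nonpos (convex_Ioc 0 s1)
    · intro s hs
      obtain ⟨d, _, hd⟩ := hψd s hs
      exact hd.continuousAt.continuousWithinAt
    · intro s hs
      obtain ⟨d, _, hd⟩ := hψd s (interior_subset hs)
      exact hd.differentiableAt.differentiableWithinAt
    · intro s hs
      obtain ⟨d, hd0, hd⟩ := hψd s (interior_subset hs)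
      rw [hd.deriv]; exact hd0
  refine ⟨L, ψ s1, ?_, ?_⟩
  · exact mul_pos (h s1 ⟨hs1, le_rfl⟩).1 (Real.exp_pos _)
  · intro s hs
    have h1 := hψm hs ⟨hs1, le_rfl⟩ hs.2
    have h2 : Real.exp (-L * Real.log s) * s ^ L = 1 := by
      have : s ^ L = Real.exp (L * Real.log s) := by
        rw [Real.exp_nat_mul, Real.exp_log hs.1]
      rw [this, ← Real.exp_add]; simp
    calc ψ s1 * s ^ L ≤ ψ s * s ^ L := by have := hs.1; gcongr
      _ = H s * (Real.exp (-L * Real.log s) * s ^ L) := by simp only [hψ]; ring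
      _ = H s := by rw [h2, mul_one]

lemma xG {x s : ℝ} (hs : 0 < s) (n : ℕ) :
    x ^ (2 * n) * G x s ≤ (4 * s) ^ n * n.factorial := by
  have h := Real.pow_div_factorial_le_exp (x ^ 2 / (4 * s)) (by positivity) n
  have hG : G x s * Real.exp (x ^ 2 / (4 * s)) = 1 := by
    unfold G; rw [← Real.exp_add]; simp [neg_div]
  have hf : (0 : ℝ) < n.factorial := by positivity
  have h2 : (x ^ 2 / (4 * s)) ^ n / n.factorial * G x s ≤ 1 := by
    rw [← hG, mul_comm]
    have := G_pos x s
    gcongr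
  rw [div_pow, ← pow_mul] at h2
  have : x ^ (2 * n) * G x s = (x ^ (2 * n) / (4 * s) ^ n / n.factorial * G x s)
      * ((4 * s) ^ n * n.factorial) := by field_simp
  rw [this]
  have h4 : 0 ≤ (4 * s) ^ n * (n.factorial : ℝ) := by positivity
  nlinarith

lemma Q_zero {a : ℕ → ℕ → ℝ} (N : ℕ) (ha : ∀ i j, a i j = 0) (x s : ℝ) : Q N a x s = 0 := by
  have : a = fun _ _ => 0 := by funext i j; exact ha i j
  subst this
  simp [Q]

lemma H_upper {u : ℝ × ℝ → ℝ} (hu : Sm u) (hj : ∀ i j, jet u i j = 0) {δ : ℝ} (hδ : 0 < δ)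
    (hδ1 : δ ≤ 1) (n : ℕ) : ∃ C, 0 ≤ C ∧ ∀ s, 0 < s → s ≤ 1 →
      J δ s (fun x => u (x, s) ^ 2) ≤ C * s ^ (n + 1) := by
  obtain ⟨C, hC, hb⟩ := taylor n u hu (by intros; exact hj _ _)
  refine ⟨(C ^ 2 * 2 ^ (2 * (n + 1) - 1) * (4 ^ (n + 1) * (n + 1).factorial + 1)) * (2 * δ),
    by positivity, fun s hs hs1 => ?_⟩
  have c0 := hu.cx s
  have hG := G_cont s
  have h1 := int_mono (a := -δ) (b := δ) (by linarith) (f := fun x => u (x, s) ^ 2 * G x s)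
    (g := fun _ => (C ^ 2 * 2 ^ (2 * (n + 1) - 1) * (4 ^ (n + 1) * (n + 1).factorial + 1))
      * s ^ (n + 1))
    (Continuous.intervalIntegrable (by fun_prop) _ _)
    (Continuous.intervalIntegrable (by fun_prop) _ _) (fun x hx => by
      have hx1 : |x| ≤ 1 := abs_le.2 ⟨by linarith [hx.1], by linarith [hx.2]⟩
      have hb' := hb x (√s) hx1 (Real.sqrt_nonneg s) (Real.sqrt_le_one.2 hs1)
      rw [Q_zero _ hj, sub_zero, Real.sq_sqrt hs.le] at hb'
      have q1 : u (x, s) ^ 2 ≤ (C * (|x| + √s) ^ (n + 1)) ^ 2 :=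
        sq_le_sq' (by linarith [abs_le.1 hb']) (abs_le.1 hb').2
      have q2 : (|x| + √s) ^ (2 * (n + 1)) ≤ 2 ^ (2 * (n + 1) - 1) * (|x| ^ (2 * (n + 1))
          + √s ^ (2 * (n + 1))) := add_pow_le (abs_nonneg _) (Real.sqrt_nonneg _) _
      have q3 : √s ^ (2 * (n + 1)) = s ^ (n + 1) := by rw [pow_mul, Real.sq_sqrt hs.le]
      have q4 : |x| ^ (2 * (n + 1)) = x ^ (2 * (n + 1)) := by rw [pow_mul, sq_abs, ← pow_mul]
      rw [q3, q4] at q2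
      have q5 := xG (x := x) hs (n + 1)
      have hGp := G_pos x s
      have hG1 := G_le x s hs
      calc u (x, s) ^ 2 * G x s ≤ (C * (|x| + √s) ^ (n + 1)) ^ 2 * G x s := by gcongr
        _ = C ^ 2 * ((|x| + √s) ^ (2 * (n + 1))) * G x s := by ring
        _ ≤ C ^ 2 * (2 ^ (2 * (n + 1) - 1) * (x ^ (2 * (n + 1)) + s ^ (n + 1))) * G x s := by
          gcongr
        _ = C ^ 2 * 2 ^ (2 * (n + 1) - 1) * (x ^ (2 * (n + 1)) * G x s + s ^ (n + 1) * G x s) := by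
          ring
        _ ≤ C ^ 2 * 2 ^ (2 * (n + 1) - 1) * ((4 * s) ^ (n + 1) * (n + 1).factorial
            + s ^ (n + 1) * 1) := by gcongr
        _ = _ := by rw [mul_pow]; ring)
  rw [intervalIntegral.integral_const] at h1
  refine h1.trans (le_of_eq ?_)
  simp only [smul_eq_mul]; ring

end RL

namespace RL

open MeasureTheory

lemma I_le {u : ℝ × ℝ → ℝ} (hu : Sm u) {δ s : ℝ} (hδ : 0 < δ) (hs : 0 < s)
    (hE : J δ s (fun x => u (x, s) ^ 2) < Real.exp (-δ ^ 2 / (8 * s))) :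
    ∫ x in (-(δ / 2))..(δ / 2), u (x, s) ^ 2 ≤ 16 * s / δ ^ 2 := by
  have c0 := hu.cx s
  have hG := G_cont s
  set y := δ ^ 2 / (16 * s) with hy
  have hyp : 0 < y := by positivity
  have h1 := int_mono (a := -(δ / 2)) (b := δ / 2) (by linarith)
    (f := fun x => Real.exp (-y) * u (x, s) ^ 2) (g := fun x => u (x, s) ^ 2 * G x s)
    (Continuous.intervalIntegrable (by fun_prop) _ _)
    (Continuous.intervalIntegrable (by fun_prop) _ _) (fun x hx => by
      have : Real.exp (-y) ≤ G x s := by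
        unfold G
        rw [Real.exp_le_exp, hy, neg_div, neg_le_neg_iff]
        rw [div_le_div_iff₀ (by positivity) (by positivity)]
        have : x ^ 2 ≤ (δ / 2) ^ 2 := sq_le_sq' hx.1.le hx.2.le
        nlinarith
      rw [mul_comm]
      gcongr)
  rw [intervalIntegral.integral_const_mul] at h1
  have h2 : ∫ x in (-(δ / 2))..(δ / 2), u (x, s) ^ 2 * G x s ≤ J δ s (fun x => u (x, s) ^ 2) := by
    unfold J
    refine intervalIntegral.integral_mono_interval (by linarith) (by linarith) (by linarith) ?_ ?_
    · exact Filter.Eventually.of_forall fun x => mul_nonneg (sq_nonneg _) (G_pos x s).le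
    · exact Continuous.intervalIntegrable (by fun_prop) _ _
  have h3 : Real.exp (-δ ^ 2 / (8 * s)) = Real.exp (-y) * Real.exp (-y) := by
    rw [← Real.exp_add]; congr 1; rw [hy]; field_simp; ring
  rw [h3] at hE
  have h4 : ∫ x in (-(δ / 2))..(δ / 2), u (x, s) ^ 2 ≤ Real.exp (-y) := by
    have := Real.exp_pos (-y)
    by_contra hc
    push Not at hc
    nlinarith
  refine h4.trans ?_
  have h5 : 16 * s / δ ^ 2 = y⁻¹ := by rw [hy]; field_simp
  rw [h5, Real.exp_neg]
  apply inv_anti₀ hyp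
  linarith [Real.add_one_le_exp y]

theorem sucp {u : ℝ × ℝ → ℝ} (hu : Sm u) {C δ : ℝ} (hC : 0 ≤ C) (hδ : 0 < δ) (hδ1 : δ ≤ 1)
    (hF : ∀ x s, |x| ≤ δ → 0 ≤ s → s ≤ δ →
      |dS u (x, s) + dX (dX u) (x, s)| ≤ C * (|u (x, s)| + |dX u (x, s)|))
    (hj : ∀ i j, jet u i j = 0) : ∀ x, |x| ≤ δ / 2 → u (x, 0) = 0 := by
  obtain ⟨K, hK, hfd⟩ := freq_data hu hC hδ hδ1 hF
  by_cases h : ∃ s1, 0 < s1 ∧ s1 ≤ δ ∧ ∀ s ∈ Ioc 0 s1,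
      Real.exp (-δ ^ 2 / (8 * s)) ≤ J δ s (fun x => u (x, s) ^ 2)
  · exfalso
    obtain ⟨s1, hs1, hs1δ, hE⟩ := h
    obtain ⟨L, c, hc, hL⟩ := freq_ode (H := fun s => J δ s (fun x => u (x, s) ^ 2))
      (D := fun s => J δ s (fun x => dX u (x, s) ^ 2)) hC hK hs1 (hs1δ.trans hδ1) (by
        intro s hs
        obtain ⟨H, D, A1, A2, A4, A5, e1, e2, e3, rfl, rfl, hD, d1, d2, h1, h2, h3, h4, k1, k2, k3⟩
          := hfd s hs.1 (hs.2.trans hs1δ)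
        have hEs := hE s hs
        have hEK := mul_le_mul_of_nonneg_left hEs hK
        exact ⟨lt_of_lt_of_le (Real.exp_pos _) hEs, hD, A1, A2, A4, A5, e1, e2, e3, d1, d2, h1, h2,
          h3, h4, k1.trans hEK, k2.trans hEK, k3.trans hEK⟩)
    obtain ⟨C', hC', hU⟩ := H_upper hu hj hδ hδ1 L
    set s := min s1 (c / (2 * (C' + 1))) with hs
    have hsp : 0 < s := lt_min hs1 (by positivity)
    have hss1 : s ≤ s1 := min_le_left _ _
    have h1 := (hL s ⟨hsp, hss1⟩).trans (hU s hsp (hss1.trans (hs1δ.trans hδ1)))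
    have h2 : s ≤ c / (2 * (C' + 1)) := min_le_right _ _
    rw [le_div_iff₀ (by positivity)] at h2
    have h3 : c ≤ C' * s := by
      have hp : 0 < s ^ L := by positivity
      refine le_of_mul_le_mul_right ?_ hp
      rw [pow_succ] at h1; linarith
    nlinarith
  · push Not at h
    set I : ℝ → ℝ := fun s => ∫ x in (-(δ / 2))..(δ / 2), u (x, s) ^ 2 with hI
    have hIc : Continuous I := by
      apply intervalIntegral.continuous_parametric_intervalIntegral_of_continuous'
      have := hu.continuous
      simp only [Function.uncurry_def]
      fun_prop
    have hI0 : I 0 ≤ 0 := by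
      by_contra hc
      push Not at hc
      obtain ⟨r, hr, hr'⟩ := Metric.continuousAt_iff.1 (hIc.continuousAt (x := 0)) (I 0 / 2)
        (by linarith)
      obtain ⟨s, hs, hlt⟩ := h (min δ (min (r / 2) (I 0 * δ ^ 2 / 64)))
        (lt_min hδ (lt_min (by linarith) (by positivity))) (min_le_left _ _)
      have hs2 : s ≤ r / 2 := hs.2.trans ((min_le_right _ _).trans (min_le_left _ _))
      have hs3 : s ≤ I 0 * δ ^ 2 / 64 := hs.2.trans ((min_le_right _ _).trans (min_le_right _ _))
      have hle := I_le hu hδ hs.1 hlt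
      have hd := hr' (x := s) (by rw [Real.dist_eq, sub_zero, abs_of_pos hs.1]; linarith)
      rw [Real.dist_eq] at hd
      have hd' := (abs_lt.1 hd).1
      have : 16 * s / δ ^ 2 ≤ I 0 / 4 := by
        rw [div_le_iff₀ (by positivity)]; linarith
      have e : I s = ∫ x in (-(δ / 2))..(δ / 2), u (x, s) ^ 2 := rfl
      linarith
    intro x hx
    by_contra hne
    have c0 := hu.cx 0
    have := intervalIntegral.integral_pos (a := -(δ / 2)) (b := δ / 2)
      (f := fun x => u (x, 0) ^ 2) (by linarith) (Continuous.continuousOn (by fun_prop))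
      (fun x _ => sq_nonneg _) ⟨x, abs_le.1 hx, by positivity⟩
    have e : I 0 = ∫ x in (-(δ / 2))..(δ / 2), u (x, 0) ^ 2 := rfl
    linarith

end RL

namespace RL

open MeasureTheory

lemma gron {f f' : ℝ → ℝ} {a b k : ℝ} (hab : a ≤ b) (hd : ∀ t ∈ Icc a b, HasDerivAt f (f' t) t)
    (hk : ∀ t ∈ Icc a b, f' t ≤ k * f t) : f b ≤ f a * Real.exp (k * (b - a)) := by
  have hdd : ∀ t ∈ Icc a b, HasDerivAt (fun t => f t * Real.exp (-(k * t)))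
      (f' t * Real.exp (-(k * t)) + f t * (Real.exp (-(k * t)) * -k)) t := by
    intro t ht
    have : HasDerivAt (fun t => Real.exp (-(k * t))) (Real.exp (-(k * t)) * -k) t := by
      simpa using ((hasDerivAt_id t).const_mul k).fun_neg.exp
    exact (hd t ht).mul this
  have hm : AntitoneOn (fun t => f t * Real.exp (-(k * t))) (Icc a b) := by
    apply antitoneOn_of_deriv_nonpos (convex_Icc a b)
    · intro t ht; exact (hdd t ht).continuousAt.continuousWithinAt
    · intro t ht; exact (hdd t (interior_subset ht)).differentiableAt.differentiableWithinAt
    · intro t ht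
      rw [(hdd t (interior_subset ht)).deriv]
      have := hk t (interior_subset ht)
      have := Real.exp_pos (-(k * t))
      nlinarith
  have h1 := hm ⟨le_rfl, hab⟩ ⟨hab, le_rfl⟩ hab
  simp only at h1
  have h2 : Real.exp (-(k * b)) * Real.exp (k * b) = 1 := by rw [← Real.exp_add]; simp
  calc f b = f b * Real.exp (-(k * b)) * Real.exp (k * b) := by rw [mul_assoc, h2, mul_one]
    _ ≤ f a * Real.exp (-(k * a)) * Real.exp (k * b) := by gcongr
    _ = _ := by rw [mul_assoc, ← Real.exp_add]; congr 2; ring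

lemma gron' {f f' : ℝ → ℝ} {a b k : ℝ} (hab : a ≤ b) (hd : ∀ t ∈ Icc a b, HasDerivAt f (f' t) t)
    (hk : ∀ t ∈ Icc a b, -(k * f t) ≤ f' t) : f a * Real.exp (-(k * (b - a))) ≤ f b := by
  have := gron (f := fun t => -f t) (f' := fun t => -f' t) (k := -k) hab
    (fun t ht => (hd t ht).neg) (fun t ht => by linarith [hk t ht])
  rw [neg_mul, neg_mul] at this
  linarith

lemma energy_ode {H D P Q S T : ℝ → ℝ} {C t1 t2 t0 : ℝ} (ht0 : t0 ∈ Ioo t1 t2)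
    (h0 : H t0 = 0)
    (hH : ∀ t ∈ Ioo t1 t2, HasDerivAt H (2 * P t) t)
    (hD : ∀ t ∈ Ioo t1 t2, HasDerivAt D (-2 * S t) t)
    (h : ∀ t ∈ Ioo t1 t2, 0 ≤ H t ∧ 0 ≤ D t ∧ D t = - P t + Q t ∧
      (P t - Q t / 2) ^ 2 ≤ H t * (S t + T t / 4) ∧ 0 ≤ S t + T t / 4 ∧ T t ≤ C ^ 2 * D t ∧
      |Q t| ≤ (C ^ 2 * H t + D t) / 2) : ∀ t ∈ Ioo t1 t2, H t = 0 := by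
  intro t ht
  refine le_antisymm ?_ (h t ht).1
  rcases le_total t0 t with hle | hle
  · have hsub : Icc t0 t ⊆ Ioo t1 t2 := fun x hx =>
      ⟨lt_of_lt_of_le ht0.1 hx.1, lt_of_le_of_lt hx.2 ht.2⟩
    have := gron (f := H) (f' := fun t => 2 * P t) (k := C ^ 2) hle (fun x hx => hH x (hsub hx))
      (fun x hx => by
        obtain ⟨a1, a2, a3, a4, a5, a6, a7⟩ := h x (hsub hx)
        have := (abs_le.1 a7).2
        linarith)
    rw [h0, zero_mul] at this
    exact this
  · by_contra hpos
    push Not at hpos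
    have hsub : Icc t t0 ⊆ Ioo t1 t2 := fun x hx =>
      ⟨lt_of_lt_of_le ht.1 hx.1, lt_of_le_of_lt hx.2 ht0.2⟩
    set K := D t / H t * Real.exp (C ^ 2 / 2 * (t0 - t)) with hK
    set B := H t * Real.exp (-((3 * K + C ^ 2) * (t0 - t))) with hB
    have hBp : 0 < B := by positivity
    have key : ∀ ε, 0 < ε → B ≤ ε := by
      intro ε hε
      have hX : ∀ s ∈ Icc t t0, D s ≤ K * (H s + ε) := by
        intro s hs
        have hsub' : Icc t s ⊆ Ioo t1 t2 := fun x hx => hsub ⟨hx.1, hx.2.trans hs.2⟩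
        have g := gron (f := fun s => D s / (H s + ε))
          (f' := fun s => (-2 * S s * (H s + ε) - D s * (2 * P s)) / (H s + ε) ^ 2)
          (k := C ^ 2 / 2) hs.1 (fun x hx => by
            have hx' := hsub' hx
            have : 0 < H x + ε := by linarith [(h x hx').1]
            exact (hD x hx').div ((hH x hx').add_const ε) this.ne')
          (fun x hx => by
            obtain ⟨a1, a2, a3, a4, a5, a6, a7⟩ := h x (hsub' hx)
            have hp : 0 < H x + ε := by linarith
            rw [div_le_iff₀ (by positivity)]
            have e : C ^ 2 / 2 * (D x / (H x + ε)) * (H x + ε) ^ 2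
              = C ^ 2 * D x * (H x + ε) / 2 := by field_simp
            rw [e]
            have t1 : T x * (H x + ε) ≤ C ^ 2 * D x * (H x + ε) := by gcongr
            have t2 : 0 ≤ ε * (S x + T x / 4) := by positivity
            rw [a3]
            rw [a3] at t1
            nlinarith [sq_nonneg (Q x)])
        have hp : 0 < H s + ε := by linarith [(h s (hsub hs)).1]
        rw [← div_le_iff₀ hp]
        refine g.trans ?_
        simp only [hK]
        have := (h t ht).2.1
        have := hs.2
        gcongr
        linarith
      have g := gron' (f := fun s => H s + ε) (f' := fun s => 2 * P s) (k := 3 * K + C ^ 2) hle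
        (fun x hx => (hH x (hsub hx)).add_const ε) (fun x hx => by
          obtain ⟨a1, a2, a3, a4, a5, a6, a7⟩ := h x (hsub hx)
          have := (abs_le.1 a7).1
          have := hX x hx
          have : 0 ≤ C ^ 2 * ε := by positivity
          linarith)
      rw [h0, zero_add] at g
      refine le_trans ?_ g
      rw [hB]
      gcongr
      linarith
    have := key (B / 2) (by positivity)
    linarith

/-- bounded continuous on the open interval -/
def BC (R : ℝ) (f : ℝ → ℝ) : Prop :=
  ContinuousOn f (Ioo 0 R) ∧ ∃ M, ∀ x ∈ Ioo 0 R, |f x| ≤ M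

lemma BC.add {R : ℝ} {f g : ℝ → ℝ} (hf : BC R f) (hg : BC R g) : BC R (fun x => f x + g x) := by
  obtain ⟨c1, M, h1⟩ := hf
  obtain ⟨c2, N, h2⟩ := hg
  exact ⟨c1.add c2, M + N, fun x hx => (abs_add_le _ _).trans (add_le_add (h1 x hx) (h2 x hx))⟩

lemma BC.mul {R : ℝ} {f g : ℝ → ℝ} (hf : BC R f) (hg : BC R g) : BC R (fun x => f x * g x) := by
  obtain ⟨c1, M, h1⟩ := hf
  obtain ⟨c2, N, h2⟩ := hg
  refine ⟨c1.mul c2, M * N, fun x hx => ?_⟩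
  rw [abs_mul]
  exact mul_le_mul (h1 x hx) (h2 x hx) (abs_nonneg _) ((abs_nonneg _).trans (h1 x hx))

lemma BC.const {R : ℝ} (c : ℝ) : BC R (fun _ => c) :=
  ⟨continuousOn_const, |c|, fun _ _ => le_rfl⟩

lemma BC.sub {R : ℝ} {f g : ℝ → ℝ} (hf : BC R f) (hg : BC R g) : BC R (fun x => f x - g x) := by
  obtain ⟨c1, M, h1⟩ := hf
  obtain ⟨c2, N, h2⟩ := hg
  exact ⟨c1.sub c2, M + N, fun x hx => (abs_sub _ _).trans (add_le_add (h1 x hx) (h2 x hx))⟩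

lemma BC.of_cont {R : ℝ} {f : ℝ → ℝ} (hf : ContinuousOn f (Icc 0 R)) : BC R f := by
  obtain ⟨M, hM⟩ := isCompact_Icc.exists_bound_of_continuousOn hf
  exact ⟨hf.mono Ioo_subset_Icc_self, M, fun x hx => hM x (Ioo_subset_Icc_self hx)⟩

lemma BC.sq {R : ℝ} {f : ℝ → ℝ} (hf : BC R f) : BC R (fun x => f x ^ 2) := by
  simpa only [pow_two] using hf.mul hf

lemma BC.int {R : ℝ} (hR : 0 < R) {f : ℝ → ℝ} (hf : BC R f) :
    IntervalIntegrable f volume 0 R := by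
  obtain ⟨c1, M, h1⟩ := hf
  exact integ hR.le c1 h1

lemma IBP2 {R : ℝ} (hR : 0 < R) {n : ℕ} (hn : 1 ≤ n) {v vr vrr g g' L : ℝ → ℝ}
    (cr : ContinuousOn vr (Icc 0 R)) (cg : ContinuousOn g (Icc 0 R))
    (hvr : ∀ r ∈ Ioo 0 R, HasDerivAt vr (vrr r) r) (hg : ∀ r ∈ Ioo 0 R, HasDerivAt g (g' r) r)
    (hgR : g R = 0)
    (hL : ∀ r ∈ Ioo 0 R, L r = vrr r + n / r * vr r - n / r ^ 2 * v r)
    (b1 : BC R (fun r => (vr r * g' r + n * (v r / r) * (g r / r)) * r ^ n))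
    (b2 : BC R (fun r => L r * g r * r ^ n)) :
    (∫ r in (0:ℝ)..R, (vr r * g' r + n * (v r / r) * (g r / r)) * r ^ n)
      + ∫ r in (0:ℝ)..R, L r * g r * r ^ n = 0 := by
  rw [← intervalIntegral.integral_add (b1.int hR) (b2.int hR)]
  have := intervalIntegral.integral_eq_sub_of_hasDerivAt_of_le hR.le
    (f := fun r => vr r * g r * r ^ n)
    (f' := fun r => (vr r * g' r + n * (v r / r) * (g r / r)) * r ^ n + L r * g r * r ^ n)
    (by fun_prop) (fun r hr => by
      refine (((hvr r hr).mul (hg r hr)).mul (hasDerivAt_pow n r)).congr_deriv ?_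
      rw [hL r hr]
      obtain ⟨k, rfl⟩ : ∃ k, n = k + 1 := ⟨n - 1, by omega⟩
      have := hr.1
      simp only [Nat.add_sub_cancel, pow_succ, Pi.mul_apply]
      field_simp
      ring) ((b1.add b2).int hR)
  rw [this]
  simp [hgR, show n ≠ 0 by omega]

end RL

namespace RL

open MeasureTheory

lemma quot {R M : ℝ} {f f' : ℝ → ℝ} (hc : ContinuousOn f (Icc 0 R)) (h0 : f 0 = 0)
    (hd : ∀ r ∈ Ioo 0 R, HasDerivAt f (f' r) r) (hM : ∀ r ∈ Ioo 0 R, |f' r| ≤ M) :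
    ∀ r ∈ Ioo 0 R, |f r / r| ≤ M := by
  intro r hr
  obtain ⟨c, hc1, hc2⟩ := exists_hasDerivAt_eq_slope f f' hr.1
    (hc.mono (Icc_subset_Icc le_rfl hr.2.le)) (fun x hx => hd x ⟨hx.1, hx.2.trans hr.2⟩)
  rw [h0, sub_zero, sub_zero] at hc2
  rw [← hc2]
  exact hM c ⟨hc1.1, hc1.2.trans hr.2⟩

lemma BC.pw {R : ℝ} (n : ℕ) : BC R (fun r => r ^ n) :=
  BC.of_cont (by fun_prop)

set_option maxHeartbeats 1000000 in
theorem energy {R t1 t2 t0 C : ℝ} (hR : 0 < R) (ht0 : t0 ∈ Ioo t1 t2) {n : ℕ} (hn : 1 ≤ n)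
    {v vr vt vrr vrt F : ℝ → ℝ → ℝ}
    (cv : ContinuousOn (fun p : ℝ × ℝ => v p.1 p.2) (Icc 0 R ×ˢ Ioo t1 t2))
    (cr : ContinuousOn (fun p : ℝ × ℝ => vr p.1 p.2) (Icc 0 R ×ˢ Ioo t1 t2))
    (ct : ContinuousOn (fun p : ℝ × ℝ => vt p.1 p.2) (Icc 0 R ×ˢ Ioo t1 t2))
    (crt : ContinuousOn (fun p : ℝ × ℝ => vrt p.1 p.2) (Icc 0 R ×ˢ Ioo t1 t2))
    (dv : ∀ r ∈ Ioo 0 R, ∀ t ∈ Ioo t1 t2, HasDerivAt (fun x => v x t) (vr r t) r)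
    (dr : ∀ r ∈ Ioo 0 R, ∀ t ∈ Ioo t1 t2, HasDerivAt (fun x => vr x t) (vrr r t) r)
    (dt : ∀ r ∈ Ioo 0 R, ∀ t ∈ Ioo t1 t2, HasDerivAt (fun s => v r s) (vt r t) t)
    (drt : ∀ r ∈ Ioo 0 R, ∀ t ∈ Ioo t1 t2, HasDerivAt (fun s => vr r s) (vrt r t) t)
    (dtr : ∀ r ∈ Ioo 0 R, ∀ t ∈ Ioo t1 t2, HasDerivAt (fun x => vt x t) (vrt r t) r)
    (hv0 : ∀ t ∈ Ioo t1 t2, v 0 t = 0) (hvR : ∀ t ∈ Ioo t1 t2, v R t = 0)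
    (ht00 : ∀ t ∈ Ioo t1 t2, vt 0 t = 0) (htR : ∀ t ∈ Ioo t1 t2, vt R t = 0)
    (hL : ∀ r ∈ Ioo 0 R, ∀ t ∈ Ioo t1 t2,
      vt r t - F r t = vrr r t + n / r * vr r t - n / r ^ 2 * v r t)
    (cF : ∀ t ∈ Ioo t1 t2, ContinuousOn (fun r => F r t) (Ioo 0 R))
    (bF : ∀ r ∈ Ioo 0 R, ∀ t ∈ Ioo t1 t2, |F r t| ≤ C * |v r t / r|)
    (hz : ∀ r ∈ Icc 0 R, v r t0 = 0) :
    ∀ r ∈ Icc 0 R, ∀ t ∈ Ioo t1 t2, v r t = 0 := by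
  have sl : ∀ {f : ℝ → ℝ → ℝ}, ContinuousOn (fun p : ℝ × ℝ => f p.1 p.2) (Icc 0 R ×ˢ Ioo t1 t2) →
      ∀ t ∈ Ioo t1 t2, ContinuousOn (fun r => f r t) (Icc 0 R) := fun hf t ht =>
    hf.comp (f := fun r : ℝ => (r, t)) (by fun_prop) (fun r hr => ⟨hr, ht⟩)
  have cquot : ∀ {f : ℝ → ℝ}, ContinuousOn f (Icc 0 R) →
      ContinuousOn (fun r => f r / r) (Ioo 0 R) := fun hf =>
    (hf.mono Ioo_subset_Icc_self).div continuousOn_id (fun r hr => hr.1.ne')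
  have hn' : (1 : ℝ) ≤ n := by exact_mod_cast hn
  -- bounded continuous facts
  have fix : ∀ t ∈ Ioo t1 t2, BC R (fun r => v r t) ∧ BC R (fun r => vr r t) ∧
      BC R (fun r => vt r t) ∧ BC R (fun r => vrt r t) ∧ BC R (fun r => v r t / r) ∧
      BC R (fun r => vt r t / r) ∧ BC R (fun r => F r t) := by
    intro t ht
    have b1 := BC.of_cont (sl cr t ht)
    have b2 := BC.of_cont (sl crt t ht)
    obtain ⟨-, M1, hM1⟩ := id b1
    obtain ⟨-, M2, hM2⟩ := id b2
    have q1 := quot (sl cv t ht) (hv0 t ht) (fun r hr => dv r hr t ht) hM1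
    have q2 := quot (sl ct t ht) (ht00 t ht) (fun r hr => dtr r hr t ht) hM2
    refine ⟨BC.of_cont (sl cv t ht), b1, BC.of_cont (sl ct t ht), b2, ⟨cquot (sl cv t ht), M1, q1⟩,
      ⟨cquot (sl ct t ht), M2, q2⟩, cF t ht, |C| * M1, fun r hr => ?_⟩
    calc |F r t| ≤ C * |v r t / r| := bF r hr t ht
      _ ≤ |C| * |v r t / r| := by gcongr; exact le_abs_self C
      _ ≤ |C| * M1 := by gcongr; exact q1 r hr
  set H : ℝ → ℝ := fun t => ∫ r in (0:ℝ)..R, v r t ^ 2 * r ^ n with hH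
  set D : ℝ → ℝ := fun t => ∫ r in (0:ℝ)..R,
    (vr r t * vr r t + n * (v r t / r) * (v r t / r)) * r ^ n with hD
  set P : ℝ → ℝ := fun t => ∫ r in (0:ℝ)..R, vt r t * v r t * r ^ n with hP
  set Q' : ℝ → ℝ := fun t => ∫ r in (0:ℝ)..R, F r t * v r t * r ^ n with hQ
  set S : ℝ → ℝ := fun t => ∫ r in (0:ℝ)..R, (vt r t - F r t) * vt r t * r ^ n with hS
  set T : ℝ → ℝ := fun t => ∫ r in (0:ℝ)..R, F r t ^ 2 * r ^ n with hT
  have hH0 : ∀ t ∈ Ioo t1 t2, H t = 0 := by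
    refine energy_ode (H := H) (D := D) (P := P) (Q := Q') (S := S) (T := T) (C := C) ht0 ?_ ?_ ?_ ?_
    · -- initial
      have : H t0 = ∫ r in (0:ℝ)..R, (0:ℝ) := by
        apply intervalIntegral.integral_congr
        intro r hr
        rw [uIcc_of_le hR.le] at hr
        simp [hz r hr]
      rw [this]; simp
    · intro t ht
      obtain ⟨c, hc1, hc2⟩ := exists_between ht.1
      obtain ⟨d, hd1, hd2⟩ := exists_between ht.2
      have hsub : Icc 0 R ×ˢ Icc c d ⊆ Icc 0 R ×ˢ Ioo t1 t2 := prod_mono le_rfl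
        (fun x hx => ⟨lt_of_lt_of_le hc1 hx.1, lt_of_le_of_lt hx.2 hd2⟩)
      have cv' := cv.mono hsub
      have ct' := ct.mono hsub
      obtain ⟨M, hM⟩ := (isCompact_Icc.prod isCompact_Icc).exists_bound_of_continuousOn
        (f := fun p : ℝ × ℝ => 2 * (vt p.1 p.2 * v p.1 p.2 * p.1 ^ n))
        (s := Icc 0 R ×ˢ Icc c d) (by fun_prop)
      obtain ⟨f1, f2, f3, f4, f5, f6, f7⟩ := fix t ht
      obtain ⟨-, M', hM'⟩ := f1.sq.mul (BC.pw n)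
      have := diffint (f := fun r t => v r t ^ 2 * r ^ n)
        (f' := fun r t => 2 * (vt r t * v r t * r ^ n)) (a := 0) (b := R) (c := c) (d := d)
        (t0 := t) (M := M) (M' := M') hR.le ⟨hc2, hd1⟩
        (fun r hr s hs => by
          have := dt r hr s ⟨hc1.trans hs.1, hs.2.trans hd2⟩
          refine ((this.fun_pow 2).mul_const (r ^ n)).congr_deriv ?_
          ring)
        (fun r hr s hs => hM (r, s) ⟨Ioo_subset_Icc_self hr, Ioo_subset_Icc_self hs⟩)
        (fun s hs => ((fix s ⟨hc1.trans hs.1, hs.2.trans hd2⟩).1.sq.mul (BC.pw n)).1)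
        ((BC.const 2).mul ((f3.mul f1).mul (BC.pw n))).1 hM'
      refine this.congr_deriv ?_
      rw [intervalIntegral.integral_const_mul]
    · intro t ht
      obtain ⟨c, hc1, hc2⟩ := exists_between ht.1
      obtain ⟨d, hd1, hd2⟩ := exists_between ht.2
      have hsub : Icc 0 R ×ˢ Icc c d ⊆ Icc 0 R ×ˢ Ioo t1 t2 := prod_mono le_rfl
        (fun x hx => ⟨lt_of_lt_of_le hc1 hx.1, lt_of_le_of_lt hx.2 hd2⟩)
      obtain ⟨M1, hM1⟩ := (isCompact_Icc.prod isCompact_Icc).exists_bound_of_continuousOn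
        (cr.mono hsub)
      obtain ⟨M2, hM2⟩ := (isCompact_Icc.prod isCompact_Icc).exists_bound_of_continuousOn
        (crt.mono hsub)
      obtain ⟨f1, f2, f3, f4, f5, f6, f7⟩ := fix t ht
      obtain ⟨-, M', hM'⟩ := ((f2.mul f2).add (((BC.const (n:ℝ)).mul f5).mul f5)).mul (BC.pw n)
      have bb := ((f2.mul f4).add (((BC.const (n:ℝ)).mul f5).mul f6)).mul (BC.pw n)
      have := diffint (f := fun r t => (vr r t * vr r t + n * (v r t / r) * (v r t / r)) * r ^ n)
        (f' := fun r t => 2 * ((vr r t * vrt r t + n * (v r t / r) * (vt r t / r)) * r ^ n))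
        (a := 0) (b := R) (c := c) (d := d)
        (t0 := t) (M := 2 * ((M1 * M2 + n * M1 * M2) * R ^ n)) (M' := M') hR.le ⟨hc2, hd1⟩
        (fun r hr s hs => by
          have hs' : s ∈ Ioo t1 t2 := ⟨hc1.trans hs.1, hs.2.trans hd2⟩
          have d1 := dt r hr s hs'
          have d2 := drt r hr s hs'
          refine (((d2.mul d2).add (((d1.div_const r).const_mul (n:ℝ)).mul
            (d1.div_const r))).mul_const (r ^ n)).congr_deriv ?_
          ring)
        (fun r hr s hs => by
          have hs' : s ∈ Ioo t1 t2 := ⟨hc1.trans hs.1, hs.2.trans hd2⟩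
          have q1 := quot (sl cv s hs') (hv0 s hs') (fun r hr => dv r hr s hs')
            (fun r hr => hM1 (r, s) ⟨Ioo_subset_Icc_self hr, Ioo_subset_Icc_self hs⟩) r hr
          have q2 := quot (sl ct s hs') (ht00 s hs') (fun r hr => dtr r hr s hs')
            (fun r hr => hM2 (r, s) ⟨Ioo_subset_Icc_self hr, Ioo_subset_Icc_self hs⟩) r hr
          have q3 : |vr r s| ≤ M1 := hM1 (r, s) ⟨Ioo_subset_Icc_self hr, Ioo_subset_Icc_self hs⟩
          have q4 : |vrt r s| ≤ M2 := hM2 (r, s) ⟨Ioo_subset_Icc_self hr, Ioo_subset_Icc_self hs⟩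
          have m1 : 0 ≤ M1 := (abs_nonneg _).trans q3
          have m2 : 0 ≤ M2 := (abs_nonneg _).trans q4
          have hr0 := hr.1.le
          rw [abs_mul, abs_mul, abs_pow, abs_of_nonneg hr0, abs_of_pos (by norm_num : (0:ℝ) < 2)]
          have a1 : |vr r s * vrt r s| ≤ M1 * M2 := by rw [abs_mul]; gcongr
          have a2 : |n * (v r s / r) * (vt r s / r)| ≤ n * M1 * M2 := by
            rw [abs_mul, abs_mul, Nat.abs_cast]; gcongr
          have a3 := (abs_add_le (vr r s * vrt r s) (n * (v r s / r) * (vt r s / r))).trans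
            (add_le_add a1 a2)
          have a4 : r ^ n ≤ R ^ n := by have := hr.2.le; gcongr
          gcongr)
        (fun s hs => by
          obtain ⟨f1, f2, f3, f4, f5, f6, f7⟩ := fix s ⟨hc1.trans hs.1, hs.2.trans hd2⟩
          exact (((f2.mul f2).add (((BC.const (n:ℝ)).mul f5).mul f5)).mul (BC.pw n)).1)
        ((BC.const 2).mul bb).1 hM'
      refine this.congr_deriv ?_
      rw [intervalIntegral.integral_const_mul]
      have := IBP2 hR hn (v := fun r => v r t) (vr := fun r => vr r t) (vrr := fun r => vrr r t)
        (g := fun r => vt r t) (g' := fun r => vrt r t) (L := fun r => vt r t - F r t)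
        (sl cr t ht) (sl ct t ht) (fun r hr => dr r hr t ht) (fun r hr => dtr r hr t ht)
        (htR t ht) (fun r hr => hL r hr t ht) bb (((f3.sub f7).mul f3).mul (BC.pw n))
      linarith
    · intro t ht
      obtain ⟨f1, f2, f3, f4, f5, f6, f7⟩ := fix t ht
      have w := BC.pw (R := R) n
      have bD := ((f2.mul f2).add (((BC.const (n:ℝ)).mul f5).mul f5)).mul w
      have bH := f1.sq.mul w
      have bP := (f3.mul f1).mul w
      have bQ := (f7.mul f1).mul w
      have bS := ((f3.sub f7).mul f3).mul w
      have bT := f7.sq.mul w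
      have wp : ∀ r ∈ Ioo 0 R, 0 ≤ r ^ n := fun r hr => pow_nonneg hr.1.le n
      have eS : S t + T t / 4 = ∫ r in (0:ℝ)..R,
          ((vt r t - F r t) * vt r t * r ^ n + 1 / 4 * (F r t ^ 2 * r ^ n)) := by
        rw [intervalIntegral.integral_add (bS.int hR) (((BC.const (1/4)).mul bT).int hR),
          intervalIntegral.integral_const_mul]
        simp only [hS, hT]; ring
      have eP : P t - Q' t / 2 = ∫ r in (0:ℝ)..R,
          (vt r t * v r t * r ^ n - 1 / 2 * (F r t * v r t * r ^ n)) := by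
        rw [intervalIntegral.integral_sub (bP.int hR) (((BC.const (1/2)).mul bQ).int hR),
          intervalIntegral.integral_const_mul]
        simp only [hP, hQ]; ring
      have dom : ∀ r ∈ Ioo 0 R, (v r t / r) ^ 2 ≤
          vr r t * vr r t + n * (v r t / r) * (v r t / r) := by
        intro r hr
        have : 0 ≤ (n - 1) * (v r t / r) ^ 2 := mul_nonneg (by linarith) (sq_nonneg _)
        nlinarith [sq_nonneg (vr r t)]
      have bH2 : BC R (fun r => C ^ 2 / 2 * (v r t ^ 2 * r ^ n) + 1 / 2 *
          ((vr r t * vr r t + n * (v r t / r) * (v r t / r)) * r ^ n)) :=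
        ((BC.const _).mul bH).add ((BC.const _).mul bD)
      have eHD : ∫ r in (0:ℝ)..R, (C ^ 2 / 2 * (v r t ^ 2 * r ^ n) + 1 / 2 *
          ((vr r t * vr r t + n * (v r t / r) * (v r t / r)) * r ^ n))
          = (C ^ 2 * H t + D t) / 2 := by
        rw [intervalIntegral.integral_add (((BC.const _).mul bH).int hR)
          (((BC.const _).mul bD).int hR), intervalIntegral.integral_const_mul,
          intervalIntegral.integral_const_mul]
        simp only [hH, hD]; ring
      have pw : ∀ r ∈ Ioo 0 R, |F r t * v r t| ≤ C ^ 2 / 2 * v r t ^ 2 + 1 / 2 *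
          (vr r t * vr r t + n * (v r t / r) * (v r t / r)) := by
        intro r hr
        have h1 := dom r hr
        have h2 := bF r hr t ht
        rw [abs_mul]
        have h3 : |F r t| * |v r t| ≤ C * |v r t / r| * |v r t| := by gcongr
        rw [← sq_abs] at h1
        rw [← sq_abs (v r t)]
        nlinarith [sq_nonneg (C * |v r t| - |v r t / r|)]
      refine ⟨?_, ?_, ?_, ?_, ?_, ?_, ?_⟩
      · exact int_nonneg hR.le (fun r hr => mul_nonneg (sq_nonneg _) (wp r hr))
      · exact int_nonneg hR.le (fun r hr => mul_nonneg ((sq_nonneg _).trans (dom r hr)) (wp r hr))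
      · have := IBP2 hR hn (v := fun r => v r t) (vr := fun r => vr r t) (vrr := fun r => vrr r t)
          (g := fun r => v r t) (g' := fun r => vr r t) (L := fun r => vt r t - F r t)
          (sl cr t ht) (sl cv t ht) (fun r hr => dr r hr t ht) (fun r hr => dv r hr t ht)
          (hvR t ht) (fun r hr => hL r hr t ht) bD (((f3.sub f7).mul f1).mul w)
        have e : ∫ r in (0:ℝ)..R, (vt r t - F r t) * v r t * r ^ n = P t - Q' t := by
          rw [hP, hQ, ← intervalIntegral.integral_sub (bP.int hR) (bQ.int hR)]
          congr 1; funext r; ring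
        have e' : D t = ∫ r in (0:ℝ)..R,
          (vr r t * vr r t + n * (v r t / r) * (v r t / r)) * r ^ n := rfl
        linarith
      · rw [eS, eP]
        refine cs hR.le (bH.int hR) ((bP.sub ((BC.const _).mul bQ)).int hR)
          ((bS.add ((BC.const _).mul bT)).int hR) (fun r hr l => ?_)
        have := mul_nonneg (sq_nonneg (v r t + l * (vt r t - F r t / 2))) (wp r hr)
        nlinarith
      · rw [eS]
        refine int_nonneg hR.le (fun r hr => ?_)
        have := mul_nonneg (sq_nonneg (vt r t - F r t / 2)) (wp r hr)
        nlinarith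
      · rw [hT, hD, ← intervalIntegral.integral_const_mul]
        refine int_mono hR.le (bT.int hR) (((BC.const _).mul bD).int hR) (fun r hr => ?_)
        have h1 := dom r hr
        have h2 := bF r hr t ht
        have h3 : F r t ^ 2 ≤ C ^ 2 * (v r t / r) ^ 2 := by
          rw [← mul_pow, ← sq_abs (F r t)]
          rw [← sq_abs (C * _), abs_mul]
          have : C * |v r t / r| ≤ |C| * |v r t / r| := by gcongr; exact le_abs_self C
          have h4 := h2.trans this
          gcongr
        rw [← mul_assoc]
        have := wp r hr
        gcongr
        exact h3.trans (by gcongr)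
      · rw [abs_le, ← eHD]
        constructor
        · rw [hQ, ← intervalIntegral.integral_neg]
          refine int_mono hR.le (bH2.int hR).neg (bQ.int hR) (fun r hr => ?_)
          have h1 := (abs_le.1 (pw r hr)).1
          have := mul_le_mul_of_nonneg_right h1 (wp r hr)
          linarith
        · refine int_mono hR.le (bQ.int hR) (bH2.int hR) (fun r hr => ?_)
          have h1 := (abs_le.1 (pw r hr)).2
          have := mul_le_mul_of_nonneg_right h1 (wp r hr)
          linarith
  intro r hr t ht
  by_contra hne
  have hr0 : 0 < r := by
    refine lt_of_le_of_ne hr.1 ?_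
    rintro rfl
    exact hne (hv0 t ht)
  have cvt := sl cv t ht
  have := intervalIntegral.integral_pos (a := 0) (b := R) (f := fun r => v r t ^ 2 * r ^ n) hR
    (by fun_prop) (fun x hx => mul_nonneg (sq_nonneg _) (pow_nonneg hx.1.le n))
    ⟨r, hr, by positivity⟩
  have e := hH0 t ht
  simp only [hH] at e
  linarith

end RL

namespace RL

open Topology

lemma localize {f : ℝ × ℝ → ℝ} {U : Set (ℝ × ℝ)} (hU : IsOpen U)
    (hf : ContDiffOn ℝ (⊤ : ℕ∞) f U) {p : ℝ × ℝ} (hp : p ∈ U) :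
    ∃ u, Sm u ∧ u =ᶠ[𝓝 p] f := by
  obtain ⟨ρ, hρ, hb⟩ := Metric.isOpen_iff.1 hU p hp
  let χ : ContDiffBump p := ⟨ρ / 4, ρ / 2, by positivity, by linarith⟩
  refine ⟨fun q => χ q * f q, ?_, ?_⟩
  · refine contDiff_iff_contDiffAt.2 fun q => ?_
    by_cases hq : q ∈ tsupport χ
    · rw [χ.tsupport_eq] at hq
      have hqU : q ∈ U := hb (Metric.closedBall_subset_ball (by change ρ / 2 < ρ; linarith) hq)
      exact χ.contDiff.contDiffAt.mul (hf.contDiffAt (hU.mem_nhds hqU))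
    · have h0 := notMem_tsupport_iff_eventuallyEq.1 hq
      have : (fun q => χ q * f q) =ᶠ[𝓝 q] fun _ => 0 := by
        filter_upwards [h0] with y hy
        rw [hy]; simp
      exact contDiffAt_const.congr_of_eventuallyEq this
  · filter_upwards [χ.eventuallyEq_one] with y hy
    rw [hy]; simp

noncomputable def wX (S : Set (ℝ × ℝ)) (f : ℝ × ℝ → ℝ) (p : ℝ × ℝ) : ℝ := fderivWithin ℝ f S p (1, 0)
noncomputable def wS (S : Set (ℝ × ℝ)) (f : ℝ × ℝ → ℝ) (p : ℝ × ℝ) : ℝ := fderivWithin ℝ f S p (0, 1)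

section
variable {R t1 t2 : ℝ}

lemma uds (hR : 0 < R) : UniqueDiffOn ℝ (Icc 0 R ×ˢ Ioo t1 t2) :=
  (uniqueDiffOn_Icc hR).prod isOpen_Ioo.uniqueDiffOn

lemma w_smooth (hR : 0 < R) {f : ℝ × ℝ → ℝ}
    (hf : ContDiffOn ℝ (⊤ : ℕ∞) f (Icc 0 R ×ˢ Ioo t1 t2)) (e : ℝ × ℝ) :
    ContDiffOn ℝ (⊤ : ℕ∞) (fun p => fderivWithin ℝ f (Icc 0 R ×ˢ Ioo t1 t2) p e)
      (Icc 0 R ×ˢ Ioo t1 t2) :=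
  (hf.fderivWithin (uds hR) (by simp)).clm_apply contDiffOn_const

lemma w_hX {f : ℝ × ℝ → ℝ}
    (hf : ContDiffOn ℝ (⊤ : ℕ∞) f (Icc 0 R ×ˢ Ioo t1 t2)) {r t : ℝ} (hr : r ∈ Ioo 0 R)
    (ht : t ∈ Ioo t1 t2) :
    HasDerivAt (fun x => f (x, t)) (wX (Icc 0 R ×ˢ Ioo t1 t2) f (r, t)) r := by
  have h1 := (hf.differentiableOn (by simp) (r, t)
    ⟨Ioo_subset_Icc_self hr, ht⟩).hasFDerivWithinAt
  have h2 : HasDerivWithinAt (fun x : ℝ => (x, t)) ((1 : ℝ), (0 : ℝ)) (Icc 0 R) r :=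
    ((hasDerivAt_id r).prodMk (hasDerivAt_const r t)).hasDerivWithinAt
  have h3 := h1.comp_hasDerivWithinAt (f := fun x : ℝ => (x, t)) r h2 (fun x hx => ⟨hx, ht⟩)
  exact h3.hasDerivAt (Icc_mem_nhds hr.1 hr.2)

lemma w_hS {f : ℝ × ℝ → ℝ}
    (hf : ContDiffOn ℝ (⊤ : ℕ∞) f (Icc 0 R ×ˢ Ioo t1 t2)) {r t : ℝ} (hr : r ∈ Icc 0 R)
    (ht : t ∈ Ioo t1 t2) :
    HasDerivAt (fun s => f (r, s)) (wS (Icc 0 R ×ˢ Ioo t1 t2) f (r, t)) t := by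
  have h1 := (hf.differentiableOn (by simp) (r, t) ⟨hr, ht⟩).hasFDerivWithinAt
  have h2 : HasDerivWithinAt (fun s : ℝ => (r, s)) ((0 : ℝ), (1 : ℝ)) (Ioo t1 t2) t :=
    ((hasDerivAt_const t r).prodMk (hasDerivAt_id t)).hasDerivWithinAt
  have h3 := h1.comp_hasDerivWithinAt (f := fun s : ℝ => (r, s)) t h2 (fun x hx => ⟨hr, hx⟩)
  exact h3.hasDerivAt (Ioo_mem_nhds ht.1 ht.2)

lemma w_comm {f : ℝ × ℝ → ℝ}
    (hf : ContDiffOn ℝ (⊤ : ℕ∞) f (Icc 0 R ×ˢ Ioo t1 t2)) {r t : ℝ} (hr : r ∈ Ioo 0 R)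
    (ht : t ∈ Ioo t1 t2) :
    wS (Icc 0 R ×ˢ Ioo t1 t2) (wX (Icc 0 R ×ˢ Ioo t1 t2) f) (r, t) =
      wX (Icc 0 R ×ˢ Ioo t1 t2) (wS (Icc 0 R ×ˢ Ioo t1 t2) f) (r, t) := by
  have hU : IsOpen (Ioo 0 R ×ˢ Ioo t1 t2) := isOpen_Ioo.prod isOpen_Ioo
  obtain ⟨u, hu, hue⟩ := localize hU (hf.mono (prod_mono Ioo_subset_Icc_self le_rfl))
    (p := (r, t)) ⟨hr, ht⟩
  have key : ∀ {g g' : ℝ × ℝ → ℝ}, g =ᶠ[𝓝 (r, t)] g' →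
      ∀ e, (fun p => fderivWithin ℝ g (Icc 0 R ×ˢ Ioo t1 t2) p e) =ᶠ[𝓝 (r, t)]
        fun p => fderiv ℝ g' p e := by
    intro g g' hg e
    filter_upwards [hg.eventuallyEq_nhds, hU.mem_nhds (show (r, t) ∈ Ioo 0 R ×ˢ Ioo t1 t2 from ⟨hr, ht⟩)] with p hp hpU
    rw [fderivWithin_of_mem_nhds, hp.fderiv_eq]
    exact mem_of_superset (hU.mem_nhds hpU) (prod_mono Ioo_subset_Icc_self le_rfl)
  have k1 : wX (Icc 0 R ×ˢ Ioo t1 t2) f =ᶠ[𝓝 (r, t)] dX u := key hue.symm (1, 0)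
  have k2 : wS (Icc 0 R ×ˢ Ioo t1 t2) f =ᶠ[𝓝 (r, t)] dS u := key hue.symm (0, 1)
  have k3 := (key k1 (0, 1)).eq_of_nhds
  have k4 := (key k2 (1, 0)).eq_of_nhds
  have := congrFun hu.comm (r, t)
  unfold wX wS at *
  rw [k3, k4]
  exact this

end

theorem global_zero
    (m : ℕ) (hm : 2 ≤ m) (R t1 t2 : ℝ) (hR : 0 < R)
    (b v : ℝ → ℝ → ℝ)
    (hb_smooth : ContDiffOn ℝ (⊤ : ℕ∞) (fun p : ℝ × ℝ => b p.1 p.2) (Icc 0 R ×ˢ Ioo t1 t2))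
    (hb_deriv_bdd : ∃ C : ℝ, ∀ r ∈ Icc (0:ℝ) R, ∀ t ∈ Ioo t1 t2,
      |deriv (fun x => b x t) r| ≤ C ∧ |deriv (fun s => b r s) t| ≤ C)
    (hb0 : ∀ t ∈ Ioo t1 t2, b 0 t = (m : ℝ) - 1)
    (hv_smooth : ContDiffOn ℝ (⊤ : ℕ∞) (fun p : ℝ × ℝ => v p.1 p.2) (Icc 0 R ×ˢ Ioo t1 t2))
    (hpde : ∀ r ∈ Ioo (0:ℝ) R, ∀ t ∈ Ioo t1 t2,
      deriv (fun s => v r s) t =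
        deriv (deriv (fun x => v x t)) r + (((m : ℝ) - 1) / r) * deriv (fun x => v x t) r
          - (b r t / r ^ 2) * v r t)
    (hbcR : (∀ t ∈ Ioo t1 t2, v R t = 0) ∨ (∀ t ∈ Ioo t1 t2, v R t ≠ 0))
    (hv0 : ∀ t ∈ Ioo t1 t2, v 0 t = 0) (t0 : ℝ) (ht0 : t0 ∈ Ioo t1 t2)
    (hz : ∀ r ∈ Icc 0 R, v r t0 = 0) :
    ∀ r ∈ Icc (0:ℝ) R, ∀ t ∈ Ioo t1 t2, v r t = 0 := by
  have hvR : ∀ t ∈ Ioo t1 t2, v R t = 0 := by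
    rcases hbcR with h | h
    · exact h
    · exact absurd (hz R ⟨hR.le, le_rfl⟩) (h t0 ht0)
  obtain ⟨Cb, hCb⟩ := hb_deriv_bdd
  obtain ⟨n, rfl⟩ : ∃ n, m = n + 1 := ⟨m - 1, by omega⟩
  have hn : 1 ≤ n := by omega
  have hmn : ((n + 1 : ℕ) : ℝ) - 1 = n := by push_cast; ring
  rw [hmn] at hb0 hpde
  set S := Icc 0 R ×ˢ Ioo t1 t2 with hS
  set V : ℝ × ℝ → ℝ := fun p => v p.1 p.2 with hV
  have hX : ContDiffOn ℝ (⊤ : ℕ∞) (wX S V) S := w_smooth hR hv_smooth (1, 0)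
  have hT : ContDiffOn ℝ (⊤ : ℕ∞) (wS S V) S := w_smooth hR hv_smooth (0, 1)
  have hXT : ContDiffOn ℝ (⊤ : ℕ∞) (wX S (wS S V)) S := w_smooth hR hT (1, 0)
  have z0 : ∀ r ∈ Icc 0 R, (∀ t ∈ Ioo t1 t2, v r t = 0) → ∀ t ∈ Ioo t1 t2, wS S V (r, t) = 0 := by
    intro r hr hvr t ht
    have h1 := w_hS hv_smooth hr ht
    have h2 : (fun s => V (r, s)) =ᶠ[𝓝 t] fun _ => 0 := by
      filter_upwards [Ioo_mem_nhds ht.1 ht.2] with s hs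
      exact hvr s hs
    exact h1.unique ((hasDerivAt_const t (0:ℝ)).congr_of_eventuallyEq h2)
  have dv : ∀ r ∈ Ioo 0 R, ∀ t ∈ Ioo t1 t2, HasDerivAt (fun x => v x t) (wX S V (r, t)) r :=
    fun r hr t ht => w_hX hv_smooth hr ht
  have dr : ∀ r ∈ Ioo 0 R, ∀ t ∈ Ioo t1 t2,
      HasDerivAt (fun x => wX S V (x, t)) (wX S (wX S V) (r, t)) r :=
    fun r hr t ht => w_hX hX hr ht
  have dt : ∀ r ∈ Ioo 0 R, ∀ t ∈ Ioo t1 t2, HasDerivAt (fun s => v r s) (wS S V (r, t)) t :=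
    fun r hr t ht => w_hS hv_smooth (Ioo_subset_Icc_self hr) ht
  refine energy (C := Cb) (vr := fun r t => wX S V (r, t)) (vt := fun r t => wS S V (r, t))
    (vrr := fun r t => wX S (wX S V) (r, t)) (vrt := fun r t => wX S (wS S V) (r, t))
    (F := fun r t => -((b r t - n) / r * (v r t / r))) hR ht0 hn
    hv_smooth.continuousOn hX.continuousOn hT.continuousOn hXT.continuousOn dv dr dt ?_
    (fun r hr t ht => w_hX hT hr ht) hv0 hvR
    (z0 0 ⟨le_rfl, hR.le⟩ hv0) (z0 R ⟨hR.le, le_rfl⟩ hvR) ?_ ?_ ?_ hz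
  · intro r hr t ht
    have := w_hS hX (Ioo_subset_Icc_self hr) ht
    rw [w_comm hv_smooth hr ht] at this
    exact this
  · intro r hr t ht
    have h := hpde r hr t ht
    rw [(dt r hr t ht).deriv, (dv r hr t ht).deriv] at h
    have e : deriv (fun x => v x t) =ᶠ[𝓝 r] fun x => wX S V (x, t) := by
      filter_upwards [Ioo_mem_nhds hr.1 hr.2] with x hx
      exact (dv x hx t ht).deriv
    rw [e.deriv_eq, (dr r hr t ht).deriv] at h
    rw [h]
    have := hr.1
    field_simp
    ring
  · intro t ht
    have c1 : ContinuousOn (fun r => b r t) (Ioo 0 R) :=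
      hb_smooth.continuousOn.comp (f := fun r : ℝ => (r, t)) (by fun_prop)
        (fun r hr => ⟨Ioo_subset_Icc_self hr, ht⟩)
    have c2 : ContinuousOn (fun r => v r t) (Ioo 0 R) :=
      hv_smooth.continuousOn.comp (f := fun r : ℝ => (r, t)) (by fun_prop)
        (fun r hr => ⟨Ioo_subset_Icc_self hr, ht⟩)
    have hne : ∀ x ∈ Ioo 0 R, x ≠ 0 := fun x hx => hx.1.ne'
    exact (((c1.sub continuousOn_const).div continuousOn_id hne).mul
      (c2.div continuousOn_id hne)).neg
  · intro r hr t ht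
    have c1 : ContinuousOn (fun r => b r t) (Icc 0 R) :=
      hb_smooth.continuousOn.comp (f := fun r : ℝ => (r, t)) (by fun_prop)
        (fun r hr => ⟨hr, ht⟩)
    have := quot (f := fun r => b r t - n) (f' := fun r => deriv (fun x => b x t) r)
      (c1.sub continuousOn_const) (by simp [hb0 t ht]) (fun r hr =>
        ((w_hX hb_smooth hr ht).differentiableAt.hasDerivAt).sub_const _)
      (fun r hr => (hCb r (Ioo_subset_Icc_self hr) t ht).1) r hr
    rw [abs_neg, abs_mul]
    gcongr

end RL

namespace RL

open Topology

lemma iter_zero {u : ℝ × ℝ → ℝ} (hu : Sm u) {x : ℝ} (h : ∀ᶠ y in 𝓝 x, u (y, 0) = 0) (i : ℕ) :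
    ∀ᶠ y in 𝓝 x, (dX^[i] u) (y, 0) = 0 := by
  induction i generalizing u with
  | zero => exact h
  | succ n ih =>
    rw [Function.iterate_succ_apply]
    refine ih hu.dX ?_
    filter_upwards [eventually_eventually_nhds.2 h] with y hy
    have e : (fun x => u (x, 0)) =ᶠ[𝓝 y] fun _ => 0 := hy
    exact (hu.hX y 0).unique ((hasDerivAt_const y (0:ℝ)).congr_of_eventuallyEq e)

lemma local_u
    (m : ℕ) (hm : 2 ≤ m) (R t1 t2 : ℝ)
    (b v : ℝ → ℝ → ℝ)
    (hb_bdd : ∃ C : ℝ, ∀ r ∈ Icc (0:ℝ) R, ∀ t ∈ Ioo t1 t2, |b r t| ≤ C)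
    (hv_smooth : ContDiffOn ℝ (⊤ : ℕ∞) (fun p : ℝ × ℝ => v p.1 p.2) (Icc 0 R ×ˢ Ioo t1 t2))
    (hpde : ∀ r ∈ Ioo (0:ℝ) R, ∀ t ∈ Ioo t1 t2,
      deriv (fun s => v r s) t =
        deriv (deriv (fun x => v x t)) r + (((m : ℝ) - 1) / r) * deriv (fun x => v x t) r
          - (b r t / r ^ 2) * v r t)
    (t : ℝ) (ht : t ∈ Ioo t1 t2) (r : ℝ) (hr : r ∈ Ioo 0 R) :
    ∃ (u : ℝ × ℝ → ℝ) (C δ δ0 : ℝ), Sm u ∧ 0 ≤ C ∧ 0 < δ ∧ δ ≤ 1 ∧ δ < δ0 ∧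
      (∀ x s, |x| < δ0 → |s| < δ0 → u (x, s) = v (r + x) (t - s)) ∧
      (∀ x s, |x| ≤ δ → 0 ≤ s → s ≤ δ →
        |dS u (x, s) + dX (dX u) (x, s)| ≤ C * (|u (x, s)| + |dX u (x, s)|)) := by
  have hU : IsOpen (Ioo 0 R ×ˢ Ioo t1 t2) := isOpen_Ioo.prod isOpen_Ioo
  set φ : ℝ × ℝ → ℝ × ℝ := fun q => (r + q.1, t - q.2) with hφ
  have cφ : Continuous φ := by rw [hφ]; fun_prop
  have sφ : ContDiff ℝ (⊤ : ℕ∞) φ := by rw [hφ]; fun_prop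
  have h0 : (0, 0) ∈ φ ⁻¹' (Ioo 0 R ×ˢ Ioo t1 t2) := by
    simp only [hφ, mem_preimage, add_zero, sub_zero]; exact ⟨hr, ht⟩
  have hV := (hv_smooth.mono (prod_mono Ioo_subset_Icc_self le_rfl : _ ⊆ Icc 0 R ×ˢ Ioo t1 t2)).comp
    (sφ.contDiffOn (s := φ ⁻¹' (Ioo 0 R ×ˢ Ioo t1 t2))) (fun q hq => hq)
  obtain ⟨u, hu, hue⟩ := localize (hU.preimage cφ) hV h0
  obtain ⟨δ0, hδ0, hball⟩ := Metric.eventually_nhds_iff.1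
    (hue.and ((hU.preimage cφ).mem_nhds h0))
  have hball' : ∀ x s, |x| < δ0 → |s| < δ0 → u (x, s) = v (r + x) (t - s) ∧
      r + x ∈ Ioo 0 R ∧ t - s ∈ Ioo t1 t2 := by
    intro x s hx hs
    have := hball (y := (x, s)) (by
      rw [Prod.dist_eq, Real.dist_eq, Real.dist_eq]; simp [hx, hs])
    exact ⟨this.1, this.2.1, this.2.2⟩
  obtain ⟨Cb, hCb⟩ := hb_bdd
  have hCb0 : 0 ≤ Cb := (abs_nonneg _).trans (hCb r (Ioo_subset_Icc_self hr) t ht)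
  have hm1 : (0:ℝ) ≤ (m:ℝ) - 1 := by
    have : (2:ℝ) ≤ m := by exact_mod_cast hm
    linarith
  have hr0 := hr.1
  refine ⟨u, ((m:ℝ) - 1) / (r / 2) + Cb / (r / 2) ^ 2, min (δ0 / 2) (min 1 (r / 2)), δ0, hu,
    by positivity, lt_min (by positivity) (lt_min one_pos (by positivity)),
    (min_le_right _ _).trans (min_le_left _ _), lt_of_le_of_lt (min_le_left _ _) (by linarith),
    fun x s hx hs => (hball' x s hx hs).1, ?_⟩
  intro x s hx hs0 hsδ
  have hx1 : |x| < δ0 := by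
    have := hx.trans (min_le_left _ _); linarith
  have hs1 : |s| < δ0 := by
    have := hsδ.trans (min_le_left _ _); rw [abs_of_nonneg hs0]; linarith
  have hxr : r / 2 ≤ r + x := by
    have := hx.trans ((min_le_right _ _).trans (min_le_right _ _))
    linarith [(abs_le.1 this).1]
  obtain ⟨e0, hrx, hts⟩ := hball' x s hx1 hs1
  have opn : IsOpen {y : ℝ | |y| < δ0} := isOpen_lt continuous_abs continuous_const
  have d1 : ∀ y, |y| < δ0 → deriv (fun z => v z (t - s)) (r + y) = dX u (y, s) := by
    intro y hy
    rw [← deriv_comp_const_add (f := fun z => v z (t - s))]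
    rw [← (hu.hX y s).deriv]
    apply Filter.EventuallyEq.deriv_eq
    filter_upwards [opn.mem_nhds hy] with z hz
    exact (hball' z s hz hs1).1.symm
  have d2 : deriv (deriv (fun z => v z (t - s))) (r + x) = dX (dX u) (x, s) := by
    rw [← deriv_comp_const_add (f := deriv (fun z => v z (t - s)))]
    rw [← (hu.dX.hX x s).deriv]
    apply Filter.EventuallyEq.deriv_eq
    filter_upwards [opn.mem_nhds hx1] with z hz
    exact d1 z hz
  have d3 : deriv (fun z => v (r + x) z) (t - s) = - dS u (x, s) := by
    have e1 : deriv (fun σ => v (r + x) (t - σ)) s = dS u (x, s) := by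
      rw [← (hu.hS x s).deriv]
      apply Filter.EventuallyEq.deriv_eq
      filter_upwards [opn.mem_nhds hs1] with z hz
      exact (hball' x z hx1 hz).1.symm
    rw [deriv_comp_const_sub (f := fun z => v (r + x) z)] at e1
    linarith
  have p := hpde (r + x) hrx (t - s) hts
  rw [d3, d2, d1 x hx1, ← e0] at p
  have e : dS u (x, s) + dX (dX u) (x, s) = -(((m:ℝ) - 1) / (r + x) * dX u (x, s))
      + b (r + x) (t - s) / (r + x) ^ 2 * u (x, s) := by linarith
  rw [e]
  refine (abs_add_le _ _).trans ?_
  rw [abs_neg, abs_mul, abs_mul]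
  have b1 : |((m:ℝ) - 1) / (r + x)| ≤ ((m:ℝ) - 1) / (r / 2) := by
    rw [abs_of_nonneg (div_nonneg hm1 hrx.1.le)]
    gcongr
  have b2 : |b (r + x) (t - s) / (r + x) ^ 2| ≤ Cb / (r / 2) ^ 2 := by
    rw [abs_div, abs_of_nonneg (sq_nonneg (r + x))]
    gcongr
    exact hCb _ (Ioo_subset_Icc_self hrx) _ hts
  have c1 := mul_le_mul_of_nonneg_right b1 (abs_nonneg (dX u (x, s)))
  have c2 := mul_le_mul_of_nonneg_right b2 (abs_nonneg (u (x, s)))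
  have c3 : 0 ≤ ((m:ℝ) - 1) / (r / 2) * |u (x, s)| := by positivity
  have c4 : 0 ≤ Cb / (r / 2) ^ 2 * |dX u (x, s)| := by positivity
  linarith

lemma transfer {u : ℝ × ℝ → ℝ} (hu : Sm u) {v : ℝ → ℝ → ℝ} {r0 t0 δ0 c ε : ℝ}
    (heq : ∀ x s, |x| < δ0 → |s| < δ0 → u (x, s) = v (r0 + x) (t0 - s)) (hε2 : |ε ^ 2| < δ0)
    {x : ℝ} (hx : |ε * x| < δ0) :
    c * u (ε * x, ε ^ 2) = c * v (r0 + ε * x) (t0 - ε ^ 2) ∧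
    c * (ε * dX u (ε * x, ε ^ 2)) = deriv (fun x => c * v (r0 + ε * x) (t0 - ε ^ 2)) x ∧
    c * (ε ^ 2 * dX (dX u) (ε * x, ε ^ 2)) =
      deriv (deriv (fun x => c * v (r0 + ε * x) (t0 - ε ^ 2))) x := by
  have opn : IsOpen {y : ℝ | |ε * y| < δ0} :=
    isOpen_lt (continuous_abs.comp (continuous_const.mul continuous_id)) continuous_const
  have lin : ∀ y, HasDerivAt (fun y : ℝ => ε * y) ε y := fun y => by
    simpa using (hasDerivAt_id y).const_mul ε
  have g1 : ∀ y, HasDerivAt (fun y => c * u (ε * y, ε ^ 2)) (c * (ε * dX u (ε * y, ε ^ 2))) y := by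
    intro y
    have := (HasDerivAt.comp y (hu.hX (ε * y) (ε ^ 2)) (lin y)).const_mul c
    exact this.congr_deriv (by ring)
  have g2 : ∀ y, HasDerivAt (fun y => c * (ε * dX u (ε * y, ε ^ 2)))
      (c * (ε ^ 2 * dX (dX u) (ε * y, ε ^ 2))) y := by
    intro y
    have := ((HasDerivAt.comp y (hu.dX.hX (ε * y) (ε ^ 2)) (lin y)).const_mul ε).const_mul c
    exact this.congr_deriv (by ring)
  have e0 : ∀ y, |ε * y| < δ0 → c * u (ε * y, ε ^ 2) = c * v (r0 + ε * y) (t0 - ε ^ 2) :=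
    fun y hy => by rw [heq _ _ hy hε2]
  have e1 : ∀ y, |ε * y| < δ0 → c * (ε * dX u (ε * y, ε ^ 2)) =
      deriv (fun x => c * v (r0 + ε * x) (t0 - ε ^ 2)) y := by
    intro y hy
    rw [← (g1 y).deriv]
    apply Filter.EventuallyEq.deriv_eq
    filter_upwards [opn.mem_nhds hy] with z hz
    exact e0 z hz
  refine ⟨e0 x hx, e1 x hx, ?_⟩
  rw [← (g2 x).deriv]
  apply Filter.EventuallyEq.deriv_eq
  filter_upwards [opn.mem_nhds hx] with z hz
  exact e1 z hz

lemma ev_eps {A δ0 : ℝ} (hA : 0 < A) (hδ0 : 0 < δ0) :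
    ∀ᶠ ε in nhdsWithin (0:ℝ) (Ioi 0), |ε ^ 2| < δ0 ∧ ∀ x ∈ Icc (-A) A, |ε * x| < δ0 := by
  have : Ioo (0:ℝ) (min 1 (min δ0 (δ0 / A))) ∈ nhdsWithin (0:ℝ) (Ioi 0) :=
    Ioo_mem_nhdsGT (lt_min one_pos (lt_min hδ0 (by positivity)))
  filter_upwards [this] with ε hε
  have h1 : ε < 1 := lt_of_lt_of_le hε.2 (min_le_left _ _)
  have h2 : ε < δ0 := lt_of_lt_of_le hε.2 ((min_le_right _ _).trans (min_le_left _ _))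
  have h3 : ε < δ0 / A := lt_of_lt_of_le hε.2 ((min_le_right _ _).trans (min_le_right _ _))
  have h0 := hε.1
  rw [lt_div_iff₀ hA] at h3
  refine ⟨?_, fun x hx => ?_⟩
  · rw [abs_of_nonneg (sq_nonneg _)]; nlinarith
  · rw [abs_mul, abs_of_pos h0]
    have : |x| ≤ A := abs_le.2 hx
    nlinarith

end RL

open RL Topology in
theorem rescaled_limit_away_from_origin
    (m : ℕ) (hm : 2 ≤ m) (R t1 t2 : ℝ) (hR : 0 < R) (ht12 : t1 < t2)
    (b v : ℝ → ℝ → ℝ)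
    (hb_smooth : ContDiffOn ℝ (⊤ : ℕ∞) (fun p : ℝ × ℝ => b p.1 p.2) (Icc 0 R ×ˢ Ioo t1 t2))
    (hb_bdd : ∃ C : ℝ, ∀ r ∈ Icc (0:ℝ) R, ∀ t ∈ Ioo t1 t2, |b r t| ≤ C)
    (hb_deriv_bdd : ∃ C : ℝ, ∀ r ∈ Icc (0:ℝ) R, ∀ t ∈ Ioo t1 t2,
      |deriv (fun x => b x t) r| ≤ C ∧ |deriv (fun s => b r s) t| ≤ C)
    (hb0 : ∀ t ∈ Ioo t1 t2, b 0 t = (m : ℝ) - 1)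
    (hbr0 : ∀ t ∈ Ioo t1 t2, deriv (fun x => b x t) 0 = 0)
    (hv_smooth : ContDiffOn ℝ (⊤ : ℕ∞) (fun p : ℝ × ℝ => v p.1 p.2) (Icc 0 R ×ˢ Ioo t1 t2))
    (hpde : ∀ r ∈ Ioo (0:ℝ) R, ∀ t ∈ Ioo t1 t2,
      deriv (fun s => v r s) t =
        deriv (deriv (fun x => v x t)) r + (((m : ℝ) - 1) / r) * deriv (fun x => v x t) r
          - (b r t / r ^ 2) * v r t)
    (hbcR : (∀ t ∈ Ioo t1 t2, v R t = 0) ∨ (∀ t ∈ Ioo t1 t2, v R t ≠ 0))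
    (hv0 : ∀ t ∈ Ioo t1 t2, v 0 t = 0)
    (hnz : ¬ ∀ r ∈ Icc (0:ℝ) R, ∀ t ∈ Ioo t1 t2, v r t = 0)
    :
    ∀ t0 ∈ Ioo t1 t2, ∀ r0 ∈ Ioo (0:ℝ) R, ∃ (k : ℕ) (p : Polynomial ℝ), p ≠ 0 ∧
      (∀ r : ℝ,
        deriv (deriv fun x => p.eval x) r - (1 / 2) * r * deriv (fun x => p.eval x) r
          + ((k : ℝ) / 2) * p.eval r = 0) ∧
      (∀ A : ℝ, 0 < A →
        TendstoUniformlyOn (fun ε r => ε ^ (-(k : ℤ)) * v (r0 + ε * r) (t0 - ε ^ 2))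
          (fun x => p.eval x) (nhdsWithin 0 (Ioi 0)) (Icc (-A) A) ∧
        TendstoUniformlyOn
          (fun ε r => deriv (fun x => ε ^ (-(k : ℤ)) * v (r0 + ε * x) (t0 - ε ^ 2)) r)
          (deriv fun x => p.eval x) (nhdsWithin 0 (Ioi 0)) (Icc (-A) A) ∧
        TendstoUniformlyOn
          (fun ε r => deriv (deriv (fun x => ε ^ (-(k : ℤ)) * v (r0 + ε * x) (t0 - ε ^ 2))) r)
          (deriv (deriv fun x => p.eval x)) (nhdsWithin 0 (Ioi 0)) (Icc (-A) A)) := by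
  intro t0 ht0 r0 hr0
  have loc := local_u m hm R t1 t2 b v hb_bdd hv_smooth hpde t0 ht0
  obtain ⟨u, C, δ, δ0, hu, hC, hδ, hδ1, hδδ, heq, hF⟩ := loc r0 hr0
  have hδ0 : 0 < δ0 := hδ.trans hδδ
  have hne : ∃ i j, jet u i j ≠ 0 := by
    by_contra hall
    push Not at hall
    set Z : Set ℝ := {r | ∀ᶠ y in 𝓝 r, v y t0 = 0} with hZ
    have hZo : IsOpen Z := by
      rw [isOpen_iff_mem_nhds]
      intro r hr
      exact eventually_eventually_nhds.2 hr
    have fromJets : ∀ (r : ℝ) (u : ℝ × ℝ → ℝ) (C δ δ0 : ℝ), Sm u → 0 ≤ C → 0 < δ → δ ≤ 1 →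
        δ < δ0 → (∀ x s, |x| < δ0 → |s| < δ0 → u (x, s) = v (r + x) (t0 - s)) →
        (∀ x s, |x| ≤ δ → 0 ≤ s → s ≤ δ →
        |dS u (x, s) + dX (dX u) (x, s)| ≤ C * (|u (x, s)| + |dX u (x, s)|)) →
        (∀ i j, jet u i j = 0) → r ∈ Z := by
      intro r u C δ δ0 hu hC hδ hδ1 hδδ heq hF hj
      have hs := sucp hu hC hδ hδ1 hF hj
      have : ∀ᶠ y in 𝓝 r, dist y r < δ / 2 := Metric.ball_mem_nhds r (by positivity)
      change ∀ᶠ y in 𝓝 r, v y t0 = 0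
      filter_upwards [this] with y hy
      rw [Real.dist_eq] at hy
      have h1 := hs (y - r) hy.le
      rw [heq (y - r) 0 (by linarith) (by simp; linarith)] at h1
      simpa using h1
    have hr0Z : r0 ∈ Z := fromJets r0 u C δ δ0 hu hC hδ hδ1 hδδ heq hF hall
    have hsub : Ioo 0 R ⊆ Z := by
      refine isPreconnected_Ioo.subset_of_closure_inter_subset hZo ⟨r0, hr0, hr0Z⟩ ?_
      rintro r ⟨hrc, hr⟩
      obtain ⟨u, C, δ, δ0, hu, hC, hδ, hδ1, hδδ, heq, hF⟩ := loc r hr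
      refine fromJets r u C δ δ0 hu hC hδ hδ1 hδδ heq hF ?_
      by_contra hj
      push Not at hj
      obtain ⟨k, p, -, hk, -⟩ := blowup hu hδ hF hj
      apply hk
      have hcl : IsClosed {x : ℝ | (dX^[k] u) (x, 0) = 0} :=
        isClosed_eq ((hu.iterX k).cx 0) continuous_const
      change (0:ℝ) ∈ {x : ℝ | (dX^[k] u) (x, 0) = 0}
      rw [← hcl.closure_eq, Metric.mem_closure_iff]
      intro e he
      obtain ⟨z, hz, hzd⟩ := Metric.mem_closure_iff.1 hrc (min e δ0) (lt_min he (hδ.trans hδδ))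
      rw [dist_comm, Real.dist_eq] at hzd
      refine ⟨z - r, ?_, ?_⟩
      · refine (iter_zero hu (x := z - r) ?_ k).self_of_nhds
        have t1 : Tendsto (fun y => r + y) (𝓝 (z - r)) (𝓝 z) := by
          have : Continuous (fun y : ℝ => r + y) := by fun_prop
          simpa using this.tendsto (z - r)
        have opn : IsOpen {y : ℝ | |y| < δ0} := isOpen_lt continuous_abs continuous_const
        filter_upwards [t1.eventually hz,
          opn.mem_nhds (show |z - r| < δ0 from lt_of_lt_of_le hzd (min_le_right _ _))] with y hy hy2
        rw [heq y 0 hy2 (by simp; linarith), sub_zero]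
        exact hy
      · rw [Real.dist_eq, zero_sub, abs_neg]
        exact lt_of_lt_of_le hzd (min_le_left _ _)
    apply hnz
    refine global_zero m hm R t1 t2 hR b v hb_smooth hb_deriv_bdd hb0 hv_smooth hpde hbcR hv0 t0 ht0 ?_
    have cv : ContinuousOn (fun r => v r t0) (Icc 0 R) :=
      hv_smooth.continuousOn.comp (f := fun r : ℝ => (r, t0)) (by fun_prop)
        (fun r hr => ⟨hr, ht0⟩)
    have hE : EqOn (fun r => v r t0) (fun _ => 0) (Ioo 0 R) := fun r hr =>
      (show ∀ᶠ y in 𝓝 r, v y t0 = 0 from hsub hr).self_of_nhds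
    exact hE.of_subset_closure cv continuousOn_const Ioo_subset_Icc_self
      (closure_Ioo hR.ne).ge
  obtain ⟨k, p, hp, -, hH, hlim⟩ := blowup hu hδ hF hne
  have dp : (deriv fun x => p.eval x) = fun x => p.derivative.eval x := by
    funext x; exact p.deriv
  have dpp : (deriv (deriv fun x => p.eval x)) = fun x => p.derivative.derivative.eval x := by
    rw [dp]; funext x; exact p.derivative.deriv
  refine ⟨k, p, hp, ?_, ?_⟩
  · intro r
    rw [dpp, dp]
    exact hH r
  · intro A hA
    obtain ⟨l1, l2, l3⟩ := hlim A hA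
    rw [dpp, dp]
    have ev := ev_eps hA hδ0
    refine ⟨l1.congr ?_, l2.congr ?_, l3.congr ?_⟩
    · filter_upwards [ev] with ε hε x hx
      exact (transfer hu heq hε.1 (hε.2 x hx)).1
    · filter_upwards [ev] with ε hε x hx
      exact (transfer hu heq hε.1 (hε.2 x hx)).2.1
    · filter_upwards [ev] with ε hε x hx
      exact (transfer hu heq hε.1 (hε.2 x hx)).2.2
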